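/- For every real α > 0 and every f ∈ 𝒮 with logarithmic coefficients γ_n, the inequality ∑_{n=1}^∞ n^{1−α} |γ_n|² ≤ ζ(α+1) holds, where ζ is the Riemann zeta function; equality holds if and only if f is a rotation z/(1−e^{iθ}z)² of the Koebe function. -/

import Mathlib

/-!
The proof rests on the Abel-type inequality `∑ k |c_k|² x^k ≤ 4 log (1 / (1 - x))`, `0 < x < 1`, for
the Taylor coefficients `c_k = 2 γ_k` of `g = log (f(z)/z)`, `f ∈ 𝒮`, which is strict for every `x`
unless `f` is a rotated Koebe function. Writing `n^{-α} Γ(α) = ∫₀^∞ e^{-ns} s^{α-1} ds` and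
integrating the inequality at `x = e^{-s}` against `s^{α-1} ds` turns it into
`∑ n^{1-α} |γ_n|² < ∑ n^{-1-α} = ζ(α + 1)` (`laplace_strict`). For the Koebe rotations one has
`|γ_n| = 1/n`, hence equality.

The Abel-type inequality comes from a discrete Loewner chain. For `|κ| = 1` let
`B_ε(z) = z (e^{-ε} + κ z) / (1 + e^{-ε} κ z)`, and let `ℓ_ε` be the branch of `log (e^ε B_ε(z) / z)`
vanishing at `0`. One step replaces `L` by `L ∘ B_ε + ℓ_ε`. If `u_k`
denote the coefficients of `(1 + z L') / (1 + κ z)`, then `k c_k = u_k + κ u_{k-1}`, and to first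
order in `ε` a step moves `c_k` by `ε v`, where `v = κ u_{k-1} - u_k`. The parallelogram law for
these two expressions (`uv_identities`) and a telescoping sum show that the energy
`E(c, x) = ∑ k |c_k|² x^k + 4 log (1 - x)` obeys, with `x' = x (1 - ε (1 - x) / (1 + x))`,
`E(c_new, x) + ε (1 - x) / (1 + x) ∑ |v|² x^k ≤ E(c_old, x') + O(ε²)` (`alg_step`). Since `E ≤ 0` for
`L = 0`, after `n` steps with `n ε ≤ Λ` the energy is at most `O(ε)` (`chain`).

Every `g` is a limit of such `L`. After a dilation, `a z e^{g(z)}` is a univalent self-map `h` of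
the disk for some small `a > 0`. As long as `h` omits a point of modulus `t²`, where
`e^{-ε} = 2 t / (1 + t²)`, the square-root transformation of the Koebe osculation algorithm
factors `h` through `B_ε` and enlarges `a` by the factor `e^ε` (`osc_step`). By the Schwarz lemma this
stops after at most `Λ / ε` steps, where `a = e^{-Λ}` initially, and then `h'(0) ≥ t²`
(`radius_le_of_surj`). So `h` is nearly the identity and the coefficients of the accumulated `L`
are close to those of `g` (`osc_close`).

For strictness: all `v` vanish only when `k c_k = 2 κ^k` for every `k`, that is for a Koebe rotation
(`koebe_of_vSeq`). Otherwise compactness of the circle bounds `∑_{k < m} |v_k|²` below, uniformly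
in `κ` and for all coefficient sequences near `c` (`deficiency`). Coefficients move at bounded
speed, so the last `≈ τ / ε` steps of the chain stay near `c` and lower the energy by a fixed
amount (`chain`, `strict_approx`).
-/

open Complex Metric Real

/-- The class `𝒮` of normalized univalent (analytic and injective) functions
on the unit disk. -/
def InClassS (f : ℂ → ℂ) : Prop :=
  AnalyticOnNhd ℂ f (ball (0 : ℂ) 1) ∧ Set.InjOn f (ball (0 : ℂ) 1) ∧
    f 0 = 0 ∧ deriv f 0 = 1

/-- `γ` are the logarithmic coefficients of `f`: there is an analytic branch `g`
of `log (f z / z)` on the unit disk with `g 0 = 0` whose Taylor coefficients at `0`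
are `2 * γ n` for `n ≥ 1`. -/
def IsLogCoeffs (f : ℂ → ℂ) (γ : ℕ → ℂ) : Prop :=
  ∃ g : ℂ → ℂ, AnalyticOnNhd ℂ g (ball (0 : ℂ) 1) ∧ g 0 = 0 ∧
    (∀ z ∈ ball (0 : ℂ) 1, z ≠ 0 → Complex.exp (g z) = f z / z) ∧
    ∀ n : ℕ, 1 ≤ n → iteratedDeriv n g 0 = (n.factorial : ℂ) * (2 * γ n)

/-- `f` coincides on the unit disk with a rotation `z / (1 - e^{iθ} z)^2`
of the Koebe function. -/
def IsKoebeRotation (f : ℂ → ℂ) : Prop :=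
  ∃ θ : ℝ, Set.EqOn f
    (fun z => z / (1 - Complex.exp (θ * Complex.I) * z) ^ 2) (ball (0 : ℂ) 1)

open scoped Nat Topology

/-! ### Taylor coefficients -/

/-- The `k`-th Taylor coefficient of `L` at `0`. -/
noncomputable def co (L : ℂ → ℂ) (k : ℕ) : ℂ := iteratedDeriv k L 0 / (k ! : ℂ)

/-- Cauchy estimate for Taylor coefficients. -/
lemma co_bound {L : ℂ → ℂ} {R r A : ℝ} (hr : 0 < r) (hrR : r < R)
    (hL : DifferentiableOn ℂ L (ball 0 R)) (hA : ∀ z ∈ sphere (0:ℂ) r, ‖L z‖ ≤ A) (k : ℕ) :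
    ‖co L k‖ ≤ A / r ^ k := by
  have h := Complex.norm_iteratedDeriv_le_of_forall_mem_sphere_norm_le (c := 0) k hr
    (f := L) (C := A) ?_ hA
  · unfold co
    rw [norm_div, Complex.norm_natCast, div_le_iff₀ (by positivity)]
    calc _ ≤ _ := h
      _ = _ := by ring
  · refine DifferentiableOn.diffContOnCl (hL.mono ?_)
    exact closure_ball_subset_closedBall.trans (closedBall_subset_ball hrR)

lemma co_hasSum {L : ℂ → ℂ} {R : ℝ} (hL : DifferentiableOn ℂ L (ball 0 R)) {z : ℂ}
    (hz : z ∈ ball (0:ℂ) R) : HasSum (fun k => co L k * z ^ k) (L z) := by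
  have h := Complex.hasSum_taylorSeries_on_ball hL hz
  have he : (fun k => co L k * z ^ k)
      = fun n => ((n ! : ℂ))⁻¹ • (z - 0) ^ n • iteratedDeriv n L 0 := by
    funext k
    simp only [co, sub_zero, smul_eq_mul]
    ring
  rw [he]; exact h

lemma co_unique {L : ℂ → ℂ} {R : ℝ} (hR : 0 < R) {a : ℕ → ℂ}
    (h : ∀ z ∈ ball (0:ℂ) R, HasSum (fun k => a k * z ^ k) (L z)) (k : ℕ) : co L k = a k := by
  have hp : HasFPowerSeriesOnBall L (FormalMultilinearSeries.ofScalars ℂ a) 0 (ENNReal.ofReal R) := by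
    refine ⟨?_, by simpa using hR, ?_⟩
    · refine ENNReal.le_of_forall_nnreal_lt fun r hr => ?_
      refine FormalMultilinearSeries.le_radius_of_tendsto (l := 0) _ ?_
      have hrR : (r:ℝ) < R := by
        rw [ENNReal.ofReal, ENNReal.coe_lt_coe] at hr
        exact (Real.lt_toNNReal_iff_coe_lt).1 hr
      have := (h (r:ℂ) (by simpa using hrR)).summable.tendsto_atTop_zero.norm
      simpa using this
    · intro y hy
      have hy' : y ∈ ball (0:ℂ) R := by
        simpa [Metric.eball_ofReal] using hy
      have := h y hy'
      simpa [FormalMultilinearSeries.ofScalars, mul_comm] using this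
  have h2 := hp.factorial_smul (1:ℂ) k
  rw [co, iteratedDeriv_eq_iteratedFDeriv, ← h2]
  simp only [FormalMultilinearSeries.ofScalars, nsmul_eq_mul]
  have : (k ! : ℂ) ≠ 0 := by exact_mod_cast k.factorial_ne_zero
  simp
  field_simp

lemma co_congr {L L' : ℂ → ℂ} (h : L =ᶠ[𝓝 0] L') (k : ℕ) : co L k = co L' k := by
  unfold co; rw [h.iteratedDeriv_eq]

lemma co_zero (L : ℂ → ℂ) : co L 0 = L 0 := by simp [co]

lemma co_one (L : ℂ → ℂ) : co L 1 = deriv L 0 := by simp [co]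

lemma co_sub {L L' : ℂ → ℂ} {R : ℝ} (hR : 0 < R) (h : DifferentiableOn ℂ L (ball 0 R))
    (h' : DifferentiableOn ℂ L' (ball 0 R)) (k : ℕ) :
    co (fun z => L z - L' z) k = co L k - co L' k := by
  refine co_unique hR (a := fun k => co L k - co L' k) (fun z hz => ?_) k
  simpa [sub_mul] using (co_hasSum h hz).sub (co_hasSum h' hz)

/-- Second-order Taylor remainder at `0`, with a constant depending only on a bound for `f` on the disk. -/
lemma taylor_rem {f : ℂ → ℂ} {R M : ℝ} (hR : 0 < R) (hf : DifferentiableOn ℂ f (ball 0 R))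
    (hM : ∀ z ∈ ball (0:ℂ) R, ‖f z‖ ≤ M) {s : ℂ} (hs : ‖s‖ ≤ R / 4) :
    ‖f s - f 0 - s * deriv f 0‖ ≤ 8 * M / R ^ 2 * ‖s‖ ^ 2 := by
  have hM0 : 0 ≤ M := (norm_nonneg _).trans (hM 0 (by simpa using hR))
  have hsum := co_hasSum hf (z := s) (by simp; linarith)
  have h2 := (hasSum_nat_add_iff' 2).2 hsum
  simp only [Finset.sum_range_succ, Finset.sum_range_zero, co_zero, co_one, pow_zero, pow_one] at h2
  have hb : ∀ k, ‖co f (k+2) * s ^ (k+2)‖ ≤ (4 * M / R ^ 2 * ‖s‖ ^ 2) * (1/2) ^ k := by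
    intro k
    have := co_bound (half_pos hR) (by linarith) hf
      (fun z hz => hM z (by simp at hz ⊢; linarith)) (k+2)
    rw [norm_mul, norm_pow]
    have h3 : (‖s‖ / (R/2)) ^ k ≤ (1/2)^k := by
      refine pow_le_pow_left₀ (by positivity) ?_ _
      rw [div_le_iff₀ (by linarith)]; linarith
    calc ‖co f (k+2)‖ * ‖s‖^(k+2) ≤ M / (R/2)^(k+2) * ‖s‖^(k+2) := by gcongr
      _ = (4 * M / R ^ 2 * ‖s‖ ^ 2) * (‖s‖ / (R/2)) ^ k := by
        obtain ⟨ρ, hρ⟩ : ∃ ρ, ρ = R / 2 := ⟨_, rfl⟩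
        have hRρ : R = 2 * ρ := by rw [hρ]; ring
        have hρ0 : 0 < ρ := by rw [hρ]; linarith
        rw [← hρ, hRρ, pow_add, pow_add, div_pow ‖s‖]; field_simp; norm_num
      _ ≤ _ := by gcongr
  have hg : HasSum (fun k : ℕ => (4 * M / R ^ 2 * ‖s‖ ^ 2) * (1/2:ℝ) ^ k)
      ((4 * M / R ^ 2 * ‖s‖ ^ 2) * 2) := hasSum_geometric_two.mul_left _
  have h5 := tsum_of_norm_bounded hg hb
  rw [h2.tsum_eq] at h5
  calc _ = ‖f s - (0 + f 0 * 1 + deriv f 0 * s)‖ := by congr 1; ring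
    _ ≤ _ := h5
    _ = _ := by ring

/-! ### First-order expansion of one step of the chain -/

/-- The Blaschke-type product `B_s(z) = z (e^{-s} + κ z) / (1 + e^{-s} κ z)`. The step parameter `s` is
complex so that the expansion in `s` can be controlled by Cauchy estimates. -/
noncomputable def blB (s κ z : ℂ) : ℂ :=
  z * (Complex.exp (-s) + κ * z) / (1 + Complex.exp (-s) * (κ * z))

/-- The branch `log (1 + e^s κ z) - log (1 + e^{-s} κ z)` of `log (e^s B_s(z) / z)` that vanishes at
`z = 0`. -/
noncomputable def blL (s κ z : ℂ) : ℂ :=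
  Complex.log (1 + Complex.exp s * (κ * z)) - Complex.log (1 + Complex.exp (-s) * (κ * z))

/-- The coefficients of `(1 + z L'(z)) / (1 + κ z)`, where `c` are the Taylor coefficients of `L`. -/
noncomputable def uSeq (κ : ℂ) (c : ℕ → ℂ) : ℕ → ℂ
  | 0 => 1
  | k + 1 => ((k : ℂ) + 1) * c (k + 1) - κ * uSeq κ c k

/-- The coefficient of `z ^ (k + 1)` in `velo κ L`, where `c` are the Taylor coefficients of `L`. -/
noncomputable def vSeq (κ : ℂ) (c : ℕ → ℂ) (k : ℕ) : ℂ := κ * uSeq κ c k - uSeq κ c (k + 1)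

lemma co_mul_id {F : ℂ → ℂ} {R : ℝ} (hR : 0 < R) (hF : DifferentiableOn ℂ F (ball 0 R)) (k : ℕ) :
    co (fun z => z * F z) (k + 1) = co F k := by
  refine co_unique hR (a := fun k => Nat.casesOn k 0 (fun k => co F k)) (fun z hz => ?_) (k + 1)
  rw [← hasSum_nat_add_iff' 1]
  have h1 := (co_hasSum hF hz).mul_left z
  have e1 : (fun n : ℕ => (Nat.casesOn (n + 1) 0 (fun k => co F k) : ℂ) * z ^ (n + 1))
      = fun i => z * (co F i * z ^ i) := by
    funext k; ring
  have e2 : z * F z - ∑ i ∈ Finset.range 1, (Nat.casesOn i 0 (fun k => co F k) : ℂ) * z ^ i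
      = z * F z := by simp
  rw [e2]
  exact e1 ▸ h1

lemma co_lin {F G : ℂ → ℂ} {R : ℝ} (hR : 0 < R) (hF : DifferentiableOn ℂ F (ball 0 R))
    (hG : DifferentiableOn ℂ G (ball 0 R)) (a b : ℂ) (k : ℕ) :
    co (fun z => a * F z + b * G z) k = a * co F k + b * co G k := by
  refine co_unique hR (a := fun k => a * co F k + b * co G k) (fun z hz => ?_) k
  have := ((co_hasSum hF hz).mul_left a).add ((co_hasSum hG hz).mul_left b)
  have e1 : (fun k => (a * co F k + b * co G k) * z ^ k)
      = fun k => a * (co F k * z ^ k) + b * (co G k * z ^ k) := by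
    funext k; ring
  exact e1 ▸ this

lemma co_deriv (L : ℂ → ℂ) (k : ℕ) : co (deriv L) k = (k + 1) * co L (k + 1) := by
  unfold co
  rw [iteratedDeriv_succ', Nat.factorial_succ]
  have : (k ! : ℂ) ≠ 0 := by exact_mod_cast k.factorial_ne_zero
  have : (k + 1 : ℂ) ≠ 0 := by exact_mod_cast k.succ_ne_zero
  push_cast
  field_simp

lemma one_add_ne {w : ℂ} (h : ‖w‖ < 1) : 1 + w ≠ 0 := by
  intro h0
  have : w = -1 := by linear_combination h0
  rw [this] at h; simp at h

lemma one_add_slit {w : ℂ} (h : ‖w‖ < 1) : 1 + w ∈ slitPlane := by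
  left
  have := (abs_le.1 (Complex.abs_re_le_norm w)).1
  simp; linarith

/-- The velocity field `1 - (1 + z L') (1 - κ z) / (1 + κ z)`: the derivative at `s = 0` of the step
`L ∘ B_s + log (e^s B_s(z) / z)`. -/
noncomputable def velo (κ : ℂ) (L : ℂ → ℂ) (z : ℂ) : ℂ :=
  1 - (1 + z * deriv L z) * (1 - κ * z) / (1 + κ * z)

lemma velo_diff {L : ℂ → ℂ} {R : ℝ} (hR : 0 < R) (hR1 : R ≤ 1) {κ : ℂ} (hκ : ‖κ‖ = 1)
    (hL : DifferentiableOn ℂ L (ball 0 R)) :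
    DifferentiableOn ℂ (velo κ L) (ball 0 R) ∧ ∀ k, co (velo κ L) (k + 1) = vSeq κ (co L) k := by
  have hd : DifferentiableOn ℂ (deriv L) (ball 0 R) := hL.deriv isOpen_ball
  have hne : ∀ z ∈ ball (0:ℂ) R, 1 + κ * z ≠ 0 := fun z hz => by
    apply one_add_ne; rw [norm_mul, hκ]; simp at hz; linarith
  set U : ℂ → ℂ := fun z => (1 + z * deriv L z) / (1 + κ * z) with hU
  have hUd : DifferentiableOn ℂ U (ball 0 R) := by
    apply DifferentiableOn.div _ _ hne <;> fun_prop
  have hzU : DifferentiableOn ℂ (fun z => z * U z) (ball 0 R) := by fun_prop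
  have hzd : DifferentiableOn ℂ (fun z => z * deriv L z) (ball 0 R) := by fun_prop
  have hnhds : ball (0:ℂ) R ∈ 𝓝 (0:ℂ) := ball_mem_nhds _ hR
  have hco : ∀ k, co U k = uSeq κ (co L) k := by
    intro k
    induction k with
    | zero => simp [co_zero, hU, uSeq]
    | succ k ih =>
      have h1 := co_lin hR hUd hzU 1 κ (k + 1)
      rw [co_mul_id hR hUd] at h1
      have h2 := co_lin hR (differentiableOn_const (1:ℂ)) hzd 1 1 (k + 1)
      rw [co_mul_id hR hd, co_deriv] at h2
      have h3 : (fun z => 1 * U z + κ * (z * U z)) =ᶠ[𝓝 0]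
          (fun z => 1 * (1:ℂ) + 1 * (z * deriv L z)) := by
        filter_upwards [hnhds] with z hz
        have := hne z hz
        simp only [hU]
        linear_combination div_mul_cancel₀ (1 + z * deriv L z) this
      rw [co_congr h3, h2] at h1
      have h4 : co (fun _ : ℂ => (1:ℂ)) (k + 1) = 0 := by
        simp [co, iteratedDeriv_const]
      rw [h4] at h1
      rw [uSeq, ← ih]; linear_combination -h1
  have hv : velo κ L = fun z => 1 - U z * (1 - κ * z) := by
    funext z; simp only [velo, hU]; ring
  refine ⟨?_, fun k => ?_⟩
  · rw [hv]; fun_prop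
  · have h1 := co_lin hR hUd hzU (-1) κ (k + 1)
    rw [co_mul_id hR hUd, hco, hco] at h1
    have h2 := co_lin (F := fun _ => (1:ℂ)) (G := fun z => -1 * U z + κ * (z * U z)) hR
      (differentiableOn_const (1:ℂ)) (by fun_prop) 1 1 (k + 1)
    have h4 : co (fun _ : ℂ => (1:ℂ)) (k + 1) = 0 := by
      simp [co, iteratedDeriv_const]
    rw [h4, h1] at h2
    have h5 : velo κ L = fun z => 1 * 1 + 1 * (-1 * U z + κ * (z * U z)) := by
      rw [hv]; funext z; ring
    rw [h5, h2, vSeq]; ring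

lemma exp_sub_one_small {s : ℂ} {s0 : ℝ} (h : ‖s‖ < s0) (h1 : s0 ≤ 1) :
    ‖Complex.exp s - 1‖ ≤ 2 * s0 := by
  have := Complex.norm_exp_sub_one_le (x := s) (by linarith)
  linarith

lemma norm_exp_mul_lt {s w : ℂ} {s0 ρ : ℝ} (h : ‖s‖ < s0) (h1 : s0 ≤ 1) (hw : ‖w‖ ≤ ρ)
    (hρ : ρ < 1) (h0 : 4 * s0 ≤ 1 - ρ) : ‖Complex.exp s * w‖ ≤ 1 - (1 - ρ) / 2 := by
  have h2 := exp_sub_one_small h h1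
  have h3 : ‖Complex.exp s‖ ≤ 1 + 2 * s0 := by
    calc ‖Complex.exp s‖ = ‖1 + (Complex.exp s - 1)‖ := by congr 1; ring
      _ ≤ _ := (norm_add_le _ _).trans (by simp; linarith)
  rw [norm_mul]
  have hρ0 : 0 ≤ ρ := (norm_nonneg _).trans hw
  have hs0 : 0 ≤ s0 := (norm_nonneg _).trans h.le
  calc _ ≤ (1 + 2 * s0) * ρ := by gcongr
    _ ≤ _ := by nlinarith

lemma norm_log_le {w : ℂ} {ρ : ℝ} (hρ : ρ < 1) (hw : ‖w‖ ≤ 1 - (1 - ρ) / 2) :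
    ‖Complex.log (1 + w)‖ ≤ 1 / (1 - ρ) + 1 := by
  have h := Complex.norm_log_one_add_le (z := w) (by linarith)
  have h1 : (1 - ‖w‖)⁻¹ ≤ 2 / (1 - ρ) := by
    rw [inv_le_comm₀ (by linarith) (div_pos two_pos (by linarith)), inv_div]; linarith
  have h0 := norm_nonneg w
  have h2 : ‖w‖ ^ 2 * (1 - ‖w‖)⁻¹ / 2 ≤ 1 * (2 / (1 - ρ)) / 2 := by
    gcongr
    · exact inv_nonneg.2 (by linarith)
    · nlinarith
  calc _ ≤ _ := h
    _ ≤ 1 * (2 / (1 - ρ)) / 2 + 1 := by linarith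
    _ = _ := by ring

/-- For a small parameter `s` the map `B_s` sends the disk of radius `ρ` into a larger disk of radius `R`. -/
lemma blB_mem {s κ z : ℂ} {s0 ρ R : ℝ} (hs : ‖s‖ < s0) (hρ : 0 ≤ ρ) (hρR : ρ < R) (hR : R ≤ 1)
    (h0 : 16 * s0 ≤ (R - ρ) * (1 - ρ)) (hκ : ‖κ‖ = 1) (hz : ‖z‖ ≤ ρ) :
    blB s κ z ∈ ball (0:ℂ) R := by
  have h4 : 4 * s0 ≤ 1 - ρ := by nlinarith
  have hs1 : s0 ≤ 1 := by nlinarith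
  have hκz : ‖κ * z‖ ≤ ρ := by rw [norm_mul, hκ, one_mul]; exact hz
  have h1 := norm_exp_mul_lt (s := -s) (w := κ * z) (by simpa using hs) hs1 hκz (by linarith) h4
  have hne : 1 + Complex.exp (-s) * (κ * z) ≠ 0 := one_add_ne (by linarith)
  have hd : (1 - ρ) / 2 ≤ ‖1 + Complex.exp (-s) * (κ * z)‖ := by
    have := norm_sub_norm_le (1:ℂ) (-(Complex.exp (-s) * (κ * z)))
    rw [norm_neg, sub_neg_eq_add, norm_one] at this
    linarith
  have he : blB s κ z = z + z * (Complex.exp (-s) - 1) * (1 - κ * z)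
      / (1 + Complex.exp (-s) * (κ * z)) := by
    unfold blB
    rw [div_eq_iff hne, add_mul, div_mul_cancel₀ _ hne]; ring
  have h2 := exp_sub_one_small (s := -s) (by simpa using hs) hs1
  have h3 : ‖1 - κ * z‖ ≤ 2 := (norm_sub_le _ _).trans (by simp at hκz ⊢; linarith)
  have hs0 : 0 ≤ s0 := (norm_nonneg _).trans hs.le
  have h5 : ‖z * (Complex.exp (-s) - 1) * (1 - κ * z)
      / (1 + Complex.exp (-s) * (κ * z))‖ ≤ ρ * (2 * s0) * 2 / ((1 - ρ) / 2) := by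
    rw [norm_div, norm_mul, norm_mul]
    gcongr
    linarith
  have h6 : ρ * (2 * s0) * 2 / ((1 - ρ) / 2) ≤ (R - ρ) / 2 := by
    rw [div_le_iff₀ (by linarith)]; nlinarith
  rw [he, mem_ball_zero_iff]
  calc _ ≤ _ := norm_add_le _ _
    _ < R := by linarith

/-- One step agrees with `L + s * velo κ L` up to a quadratic error in `s`, pointwise and with an
explicit constant. -/
lemma step_pointwise {L : ℂ → ℂ} {ρ R A s0 : ℝ} (hρ : 0 ≤ ρ) (hρR : ρ < R) (hR : R ≤ 1)
    (hs0 : 0 < s0) (h0 : 16 * s0 ≤ (R - ρ) * (1 - ρ)) {κ : ℂ} (hκ : ‖κ‖ = 1)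
    (hL : DifferentiableOn ℂ L (ball 0 R)) (hA : ∀ z ∈ ball (0:ℂ) R, ‖L z‖ ≤ A)
    {z s : ℂ} (hz : ‖z‖ ≤ ρ) (hs : ‖s‖ ≤ s0 / 4) :
    ‖(L (blB s κ z) + blL s κ z) - L z - s * velo κ L z‖
      ≤ 8 * (A + 2 * (1 / (1 - ρ) + 1)) / s0 ^ 2 * ‖s‖ ^ 2 := by
  have h4 : 4 * s0 ≤ 1 - ρ := by nlinarith
  have hs1 : s0 ≤ 1 := by nlinarith
  have hρ1 : ρ < 1 := by linarith
  have hκz : ‖κ * z‖ ≤ ρ := by rw [norm_mul, hκ, one_mul]; exact hz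
  have hm : ∀ t ∈ ball (0:ℂ) s0, ‖Complex.exp (-t) * (κ * z)‖ ≤ 1 - (1 - ρ) / 2 := fun t ht =>
    norm_exp_mul_lt (by simpa using ht) hs1 hκz hρ1 h4
  have hp : ∀ t ∈ ball (0:ℂ) s0, ‖Complex.exp t * (κ * z)‖ ≤ 1 - (1 - ρ) / 2 := fun t ht =>
    norm_exp_mul_lt (by simpa using ht) hs1 hκz hρ1 h4
  have hB : ∀ t ∈ ball (0:ℂ) s0, blB t κ z ∈ ball (0:ℂ) R := fun t ht =>
    blB_mem (by simpa using ht) hρ hρR hR h0 hκ hz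
  have hlog : DifferentiableOn ℂ (fun t => blL t κ z) (ball 0 s0) := by
    unfold blL
    apply DifferentiableOn.sub
    · apply DifferentiableOn.clog (by fun_prop)
      intro t ht; exact one_add_slit (by linarith [hp t ht])
    · apply DifferentiableOn.clog (by fun_prop)
      intro t ht; exact one_add_slit (by linarith [hm t ht])
  have hBd : DifferentiableOn ℂ (fun t => blB t κ z) (ball 0 s0) := by
    unfold blB
    apply DifferentiableOn.div (by fun_prop) (by fun_prop)
    intro t ht; exact one_add_ne (by linarith [hm t ht])
  have hΦ : DifferentiableOn ℂ (fun t => L (blB t κ z) + blL t κ z) (ball 0 s0) :=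
    (hL.comp hBd hB).add hlog
  have hbd : ∀ t ∈ ball (0:ℂ) s0, ‖L (blB t κ z) + blL t κ z‖ ≤ A + 2 * (1 / (1 - ρ) + 1) := by
    intro t ht
    have e1 := norm_log_le hρ1 (hp t ht)
    have e2 := norm_log_le hρ1 (hm t ht)
    have e3 := hA _ (hB t ht)
    have e4 : ‖blL t κ z‖ ≤ _ := norm_sub_le _ _
    exact (norm_add_le _ _).trans (by linarith)
  have key := taylor_rem hs0 hΦ hbd hs
  have hne : 1 + κ * z ≠ 0 := one_add_ne (by linarith)
  have hB0 : blB 0 κ z = z := by unfold blB; simp [mul_div_assoc, div_self hne]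
  have hL0 : blL 0 κ z = 0 := by unfold blL; simp
  have hder : HasDerivAt (fun t => L (blB t κ z) + blL t κ z) (velo κ L z) 0 := by
    have d1 : HasDerivAt (fun t : ℂ => Complex.exp (-t)) (-1) 0 := by
      have := (hasDerivAt_id (0:ℂ)).neg.cexp; simpa using this
    have d2 : HasDerivAt (fun t : ℂ => Complex.exp t) 1 0 := by
      have := (hasDerivAt_id (0:ℂ)).cexp; simpa using this
    have d3 : HasDerivAt (fun t => 1 + Complex.exp (-t) * (κ * z)) (-(κ * z)) 0 := by
      have := (d1.mul_const (κ * z)).const_add 1; simpa using this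
    have d4 : HasDerivAt (fun t => 1 + Complex.exp t * (κ * z)) (κ * z) 0 := by
      have := (d2.mul_const (κ * z)).const_add 1; simpa using this
    have d5 : HasDerivAt (fun t => z * (Complex.exp (-t) + κ * z)) (z * (-1)) 0 :=
      (d1.add_const (κ * z)).const_mul z
    have d6 : HasDerivAt (fun t => blB t κ z) (- z * (1 - κ * z) / (1 + κ * z)) 0 := by
      have := d5.div d3 (by simpa using hne)
      unfold blB
      refine this.congr_deriv ?_
      simp only [neg_zero, Complex.exp_zero, one_mul]
      generalize κ * z = w at hne
      field_simp; ring
    have d7 : HasDerivAt (fun t => blL t κ z) (2 * (κ * z) / (1 + κ * z)) 0 := by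
      have a1 := d4.clog (by simpa using one_add_slit (w := κ * z) (by linarith))
      have a2 := d3.clog (by simpa using one_add_slit (w := κ * z) (by linarith))
      have := a1.sub a2
      unfold blL
      refine this.congr_deriv ?_
      simp only [neg_zero, Complex.exp_zero, one_mul]
      generalize κ * z = w at hne
      field_simp; ring
    have d8 : HasDerivAt L (deriv L z) (blB 0 κ z) := by
      rw [hB0]
      exact (hL.differentiableAt (isOpen_ball.mem_nhds (by simp; linarith))).hasDerivAt
    have := (d8.comp (0:ℂ) d6).add d7
    refine this.congr_deriv ?_
    unfold velo
    generalize κ * z = w at hne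
    field_simp; ring
  rw [hder.deriv, hB0, hL0, add_zero] at key
  exact key

lemma step_diff {L : ℂ → ℂ} {ρ R s0 : ℝ} (hρ : 0 ≤ ρ) (hρR : ρ < R) (hR : R ≤ 1)
    (h0 : 16 * s0 ≤ (R - ρ) * (1 - ρ)) {κ : ℂ} (hκ : ‖κ‖ = 1)
    (hL : DifferentiableOn ℂ L (ball 0 R)) {s : ℂ} (hs : ‖s‖ < s0) :
    DifferentiableOn ℂ (fun z => L (blB s κ z) + blL s κ z) (ball 0 ρ) := by
  have h4 : 4 * s0 ≤ 1 - ρ := by nlinarith [norm_nonneg s]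
  have hs1 : s0 ≤ 1 := by nlinarith
  have hρ1 : ρ < 1 := by linarith
  have hκz : ∀ z ∈ ball (0:ℂ) ρ, ‖κ * z‖ ≤ ρ := fun z hz => by
    rw [norm_mul, hκ, one_mul]; simp at hz; exact hz.le
  have hm : ∀ z ∈ ball (0:ℂ) ρ, ‖Complex.exp (-s) * (κ * z)‖ ≤ 1 - (1 - ρ) / 2 := fun t ht =>
    norm_exp_mul_lt (by simpa using hs) hs1 (hκz _ ht) hρ1 h4
  have hp : ∀ z ∈ ball (0:ℂ) ρ, ‖Complex.exp s * (κ * z)‖ ≤ 1 - (1 - ρ) / 2 := fun t ht =>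
    norm_exp_mul_lt (by simpa using hs) hs1 (hκz _ ht) hρ1 h4
  have hlog : DifferentiableOn ℂ (fun z => blL s κ z) (ball 0 ρ) := by
    unfold blL
    apply DifferentiableOn.sub
    · apply DifferentiableOn.clog (by fun_prop)
      intro t ht; exact one_add_slit (by linarith [hp t ht])
    · apply DifferentiableOn.clog (by fun_prop)
      intro t ht; exact one_add_slit (by linarith [hm t ht])
  have hBd : DifferentiableOn ℂ (fun z => blB s κ z) (ball 0 ρ) := by
    unfold blB
    apply DifferentiableOn.div (by fun_prop) (by fun_prop)
    intro t ht; exact one_add_ne (by linarith [hm t ht])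
  exact (hL.comp hBd (fun z hz => blB_mem hs hρ hρR hR h0 hκ (by simp at hz; exact hz.le))).add hlog

/-- Taylor coefficients after one step: to first order in `ε` they move by `ε * vSeq`, with an error
uniform over all `L` bounded by `A` on the disk of radius `R`. -/
lemma step_coeff {R1 R : ℝ} (hR1 : 0 < R1) (hR1R : R1 < R) (hR : R ≤ 1) (A : ℝ) (hA0 : 0 ≤ A) :
    ∃ K > 0, ∃ ε0 > 0, ∀ ε : ℝ, 0 < ε → ε ≤ ε0 → ∀ κ : ℂ, ‖κ‖ = 1 → ∀ L : ℂ → ℂ,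
      DifferentiableOn ℂ L (ball 0 R) → (∀ z ∈ ball (0:ℂ) R, ‖L z‖ ≤ A) → ∀ k,
      ‖co (fun z => L (blB ε κ z) + blL ε κ z) (k + 1) - co L (k + 1) - ε * vSeq κ (co L) k‖
        ≤ K * ε ^ 2 / R1 ^ (k + 1) := by
  set ρ := (R1 + R) / 2 with hρ
  set s0 := (R - ρ) * (1 - ρ) / 16 with hs0
  have e1 : R1 < ρ := by rw [hρ]; linarith
  have e2 : ρ < R := by rw [hρ]; linarith
  have e3 : 0 < s0 := by
    rw [hs0]; apply div_pos (mul_pos _ _) <;> linarith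
  have e4 : 16 * s0 ≤ (R - ρ) * (1 - ρ) := by rw [hs0]; linarith
  have e5 : 0 < 1 / (1 - ρ) := by apply one_div_pos.2; linarith
  refine ⟨8 * (A + 2 * (1 / (1 - ρ) + 1)) / s0 ^ 2, by positivity, s0 / 4, by positivity, ?_⟩
  intro ε hε hε0 κ hκ L hL hA k
  have hn : ‖(ε:ℂ)‖ = ε := by rw [Complex.norm_real, Real.norm_of_nonneg hε.le]
  have hρ0 : 0 < ρ := by linarith
  have hsub : ball (0:ℂ) ρ ⊆ ball 0 R := ball_subset_ball e2.le
  have hd1 := step_diff hρ0.le e2 hR e4 hκ hL (s := ε) (by rw [hn]; linarith)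
  obtain ⟨hv1, hv2⟩ := velo_diff (by linarith) hR hκ hL
  have hd2 : DifferentiableOn ℂ (fun z => 1 * L z + ε * velo κ L z) (ball 0 ρ) :=
    ((differentiableOn_const (1:ℂ)).mul (hL.mono hsub)).add
      ((differentiableOn_const (ε:ℂ)).mul (hv1.mono hsub))
  have h1 := co_sub hρ0 hd1 hd2 (k + 1)
  rw [co_lin hρ0 (hL.mono hsub) (hv1.mono hsub), hv2] at h1
  have h2 := co_bound (A := 8 * (A + 2 * (1 / (1 - ρ) + 1)) / s0 ^ 2 * ε ^ 2) hR1 e1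
    (hd1.sub hd2) (fun z hz => ?_) (k + 1)
  · calc _ = ‖co (fun z => L (blB ε κ z) + blL ε κ z - (1 * L z + ε * velo κ L z)) (k + 1)‖ := by
          rw [h1]; congr 1; ring
      _ ≤ _ := h2
  · have := step_pointwise hρ0.le e2 hR e3 e4 hκ hL hA (z := z) (s := ε)
      (by simp at hz; linarith) (by rw [hn]; linarith)
    rw [hn] at this
    convert this using 2
    simp only [Pi.sub_apply]; ring

/-! ### Decrease of the energy in one step -/

/-- The Dirichlet-type sum `∑ n |c_n|² x^n` over `n ≥ 1`, indexed by `n = k + 1`; if `c` are the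
coefficients of `L`, this is the area integral of `|L'|²` over the disk of radius `√x`, divided by `π`. -/
noncomputable def DD (c : ℕ → ℂ) (x : ℝ) : ℝ := ∑' k : ℕ, ((k:ℝ) + 1) * ‖c (k + 1)‖ ^ 2 * x ^ (k + 1)

/-- The energy `DD c x - 4 log (1 / (1 - x))`, which vanishes for the Koebe function. -/
noncomputable def EE (c : ℕ → ℂ) (x : ℝ) : ℝ := DD c x + 4 * Real.log (1 - x)

lemma uSeq_bound {κ : ℂ} (hκ : ‖κ‖ = 1) {c : ℕ → ℂ} {A R : ℝ} (hA : 0 ≤ A) (hR : 0 < R) (hR1 : R ≤ 1)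
    (hc : ∀ k, ‖c (k + 1)‖ ≤ A / R ^ (k + 1)) (k : ℕ) :
    ‖uSeq κ c k‖ ≤ (1 + A) * ((k:ℝ) + 1) ^ 2 / R ^ k := by
  induction k with
  | zero => simp [uSeq]; exact hA
  | succ k ih =>
    rw [uSeq]
    have h1 : ‖((k : ℂ) + 1) * c (k + 1)‖ ≤ ((k:ℝ) + 1) * (A / R ^ (k + 1)) := by
      rw [norm_mul]
      have : ‖(k:ℂ) + 1‖ = (k:ℝ) + 1 := by
        have := Complex.norm_natCast (k + 1); push_cast at this; exact this
      rw [this]; gcongr; exact hc k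
    have h2 : ‖κ * uSeq κ c k‖ ≤ (1 + A) * ((k:ℝ) + 1) ^ 2 / R ^ (k + 1) := by
      rw [norm_mul, hκ, one_mul]
      refine ih.trans ?_
      refine div_le_div_of_nonneg_left (by positivity) (by positivity) ?_
      · exact pow_le_pow_of_le_one hR.le hR1 (Nat.le_succ k)
    refine (norm_sub_le _ _).trans ((add_le_add h1 h2).trans ?_)
    rw [mul_div_assoc', ← add_div]
    gcongr
    push_cast
    nlinarith [mul_nonneg hA (Nat.cast_nonneg (α := ℝ) k), Nat.cast_nonneg (α := ℝ) k,
      mul_nonneg (mul_nonneg hA (Nat.cast_nonneg (α := ℝ) k)) (Nat.cast_nonneg (α := ℝ) k)]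

lemma vSeq_bound {κ : ℂ} (hκ : ‖κ‖ = 1) {c : ℕ → ℂ} {A R : ℝ} (hA : 0 ≤ A) (hR : 0 < R) (hR1 : R ≤ 1)
    (hc : ∀ k, ‖c (k + 1)‖ ≤ A / R ^ (k + 1)) (k : ℕ) :
    ‖vSeq κ c k‖ ≤ 2 * (1 + A) * ((k:ℝ) + 2) ^ 2 / R ^ (k + 1) := by
  have h1 := uSeq_bound hκ hA hR hR1 hc k
  have h2 := uSeq_bound hκ hA hR hR1 hc (k + 1)
  push_cast at h2
  have h3 : (1 + A) * ((k:ℝ) + 1) ^ 2 / R ^ k ≤ (1 + A) * ((k:ℝ) + 2) ^ 2 / R ^ (k + 1) := by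
    gcongr ?_ * ?_ ^ 2 / ?_
    · linarith
    · exact pow_le_pow_of_le_one hR.le hR1 (Nat.le_succ k)
  unfold vSeq
  refine (norm_sub_le _ _).trans ?_
  rw [norm_mul, hκ, one_mul]
  have h4 : (k:ℝ) + 1 + 1 = k + 2 := by ring
  rw [h4] at h2
  calc _ ≤ (1 + A) * ((k:ℝ) + 2) ^ 2 / R ^ (k + 1) + (1 + A) * ((k:ℝ) + 2) ^ 2 / R ^ (k + 1) := by linarith
    _ = _ := by ring

/-- The identities behind the monotonicity of the energy. With `n = k + 1` they read off from
`n c_n = u_n + κ u_{n-1}` and `v = κ u_{n-1} - u_n`: the inner product of sum and difference, and the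
parallelogram law. -/
lemma uv_identities {κ : ℂ} (hκ : ‖κ‖ = 1) (c : ℕ → ℂ) (k : ℕ) :
    ((k:ℝ) + 1) * inner ℝ (c (k + 1)) (vSeq κ c k) = ‖uSeq κ c k‖ ^ 2 - ‖uSeq κ c (k + 1)‖ ^ 2 ∧
    ((k:ℝ) + 1) ^ 2 * ‖c (k + 1)‖ ^ 2
      = 2 * ‖uSeq κ c (k + 1)‖ ^ 2 + 2 * ‖uSeq κ c k‖ ^ 2 - ‖vSeq κ c k‖ ^ 2 := by
  have hw : ((k:ℝ) + 1) • c (k + 1) = uSeq κ c (k + 1) + κ * uSeq κ c k := by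
    rw [uSeq]; simp
  have hn : ‖κ * uSeq κ c k‖ = ‖uSeq κ c k‖ := by rw [norm_mul, hκ, one_mul]
  constructor
  · rw [← real_inner_smul_left, hw, vSeq, inner_add_left, inner_sub_right, inner_sub_right,
      real_inner_self_eq_norm_sq, real_inner_self_eq_norm_sq, hn, real_inner_comm]
    ring
  · have h1 := parallelogram_law_with_norm ℝ (κ * uSeq κ c k) (uSeq κ c (k + 1))
    rw [vSeq]
    have h2 : ‖(k:ℝ) + 1‖ = (k:ℝ) + 1 := Real.norm_of_nonneg (by positivity)
    rw [add_comm (κ * uSeq κ c k), ← hw, norm_smul, h2, hn] at h1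
    nlinarith

/-- Convexity of `x ^ (n + 1)`: its graph lies above its tangents. -/
lemma pow_tangent {x y : ℝ} (hy : 0 ≤ y) (hyx : y ≤ x) (n : ℕ) :
    x ^ (n + 1) ≤ y ^ (n + 1) + (x - y) * (((n:ℝ) + 1) * x ^ n) := by
  induction n with
  | zero => simp
  | succ n ih =>
    have h1 : y ^ (n + 1) ≤ x ^ (n + 1) := by gcongr
    push_cast
    rw [pow_succ x (n + 1), pow_succ y (n + 1)]
    have h2 := mul_le_mul_of_nonneg_left ih (hy.trans hyx)
    have h3 : x * x ^ n = x ^ (n + 1) := by ring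
    have h4 := mul_le_mul_of_nonneg_left h1 (sub_nonneg.2 hyx)
    have h5 : x * (y ^ (n+1) + (x - y) * (((n:ℝ) + 1) * x ^ n))
      = x * y ^ (n + 1) + (x - y) * (((n:ℝ) + 1) * x ^ (n + 1)) := by rw [← h3]; ring
    rw [h5] at h2
    nlinarith

lemma summable_G {q : ℝ} (hq : 0 ≤ q) (hq1 : q < 1) :
    Summable (fun k : ℕ => ((k:ℝ) + 2) ^ 5 * q ^ (k + 1)) := by
  have h := summable_pow_mul_geometric_of_norm_lt_one 5 (r := q) (by
    rwa [Real.norm_of_nonneg hq])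
  have h1 := ((summable_nat_add_iff 1).2 h).mul_left (2 ^ 5)
  refine Summable.of_nonneg_of_le (fun k => by positivity) (fun k => ?_) h1
  rw [← mul_assoc, ← mul_pow]
  gcongr
  push_cast
  linarith [Nat.cast_nonneg (α := ℝ) k]

/-- Comparison of a weighted coefficient bound with the fixed summable majorant of `summable_G`. -/
lemma term_bound {A R x x0 : ℝ} (hR : 0 < R) (hx : 0 ≤ x) (hx0 : x ≤ x0) {t B : ℝ} (ht : 0 ≤ t)
    (k : ℕ) (hA : 0 ≤ A) (hB : B ≤ ((k:ℝ) + 2) ^ 2) (h : t ≤ A * B / R ^ (k + 1)) :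
    ((k:ℝ) + 1) * t ^ 2 * x ^ (k + 1) ≤ A ^ 2 * (((k:ℝ) + 2) ^ 5 * (x0 / R ^ 2) ^ (k + 1)) := by
  have h0 : t ≤ A * ((k:ℝ) + 2) ^ 2 / R ^ (k + 1) := h.trans (by gcongr)
  calc ((k:ℝ) + 1) * t ^ 2 * x ^ (k + 1)
      ≤ ((k:ℝ) + 2) * (A * ((k:ℝ) + 2) ^ 2 / R ^ (k + 1)) ^ 2 * x0 ^ (k + 1) := by
        gcongr; linarith
    _ = _ := by rw [div_pow, div_pow, ← pow_mul, ← pow_mul]; ring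

lemma summable_DD {c : ℕ → ℂ} {A R x : ℝ} (hA : 0 ≤ A) (hR : 0 < R) (hx : 0 ≤ x) (hxR : x < R ^ 2)
    (hc : ∀ k, ‖c (k + 1)‖ ≤ A / R ^ (k + 1)) :
    Summable (fun k : ℕ => ((k:ℝ) + 1) * ‖c (k + 1)‖ ^ 2 * x ^ (k + 1)) := by
  have hq : x / R ^ 2 < 1 := by rw [div_lt_one (by positivity)]; exact hxR
  refine Summable.of_nonneg_of_le (fun k => by positivity)
    (fun k => term_bound hR hx le_rfl (norm_nonneg _) k hA (B := 1) ?_ (by simpa using hc k))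
    ((summable_G (by positivity) hq).mul_left _)
  nlinarith [Nat.cast_nonneg (α := ℝ) k]

/-- Change of the logarithmic part of the energy when `x` moves to `x (1 - ε (1 - x) / (1 + x))`. -/
lemma log_step {x ε : ℝ} (hx : 0 ≤ x) (hx1 : x < 1) (hε : 0 ≤ ε) :
    4 * (ε * x / (1 + x)) + 4 * Real.log (1 - x)
      ≤ 4 * Real.log (1 - x * (1 - ε * (1 - x) / (1 + x))) + 4 * ε ^ 2 := by
  set y := ε * x / (1 + x) with hy
  have hy0 : 0 ≤ y := by positivity
  have hyε : y ≤ ε := by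
    rw [hy, div_le_iff₀ (by linarith)]; nlinarith
  have h1 : 1 - x * (1 - ε * (1 - x) / (1 + x)) = (1 - x) * (1 + y) := by
    rw [hy]; have : (1 + x) ≠ 0 := by positivity
    field_simp; ring
  rw [h1, Real.log_mul (by linarith) (by positivity)]
  have h2 : y - y ^ 2 ≤ Real.log (1 + y) := by
    have := Real.one_sub_inv_le_log_of_pos (x := 1 + y) (by positivity)
    have h3 : y - y ^ 2 ≤ 1 - (1 + y)⁻¹ := by
      rw [le_sub_comm, inv_le_iff_one_le_mul₀ (by positivity)]
      nlinarith [pow_nonneg hy0 3]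
    linarith
  have : y ^ 2 ≤ ε ^ 2 := by gcongr
  linarith

/-- One step lowers the energy, up to `O(ε²)`, when the new energy at `x` is compared with the old
one at `x (1 - ε (1 - x) / (1 + x))`; the gain is a weighted square sum of the velocity. The
compared points are chosen so that the `|u_k|²` terms telescope, leaving only `|u_0|² = 1`,
which is absorbed by the logarithm. -/
lemma alg_step {A K R x0 : ℝ} (hA : 0 ≤ A) (hK : 0 ≤ K) (hR : 0 < R) (hR1 : R ≤ 1) (hx0 : 0 ≤ x0)
    (hx0R : x0 < R ^ 2) : ∃ K' > 0, ∀ ε : ℝ, 0 ≤ ε → ε ≤ 1 → ∀ κ : ℂ, ‖κ‖ = 1 → ∀ c d : ℕ → ℂ,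
      (∀ k, ‖c (k + 1)‖ ≤ A / R ^ (k + 1)) →
      (∀ k, ‖d (k + 1) - c (k + 1) - ε * vSeq κ c k‖ ≤ K * ε ^ 2 / R ^ (k + 1)) →
      ∀ x, 0 ≤ x → x ≤ x0 →
      EE d x + ε * ((1 - x) / (1 + x)) * ∑' k, ‖vSeq κ c k‖ ^ 2 * x ^ (k + 1)
        ≤ EE c (x * (1 - ε * (1 - x) / (1 + x))) + K' * ε ^ 2 ∧
      Summable (fun k => ‖vSeq κ c k‖ ^ 2 * x ^ (k + 1)) := by
  set q := x0 / R ^ 2 with hq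
  have hq0 : 0 ≤ q := by positivity
  have hq1 : q < 1 := by rw [hq, div_lt_one (by positivity)]; exact hx0R
  set G : ℕ → ℝ := fun k => ((k:ℝ) + 2) ^ 5 * q ^ (k + 1) with hG
  have hGs : Summable G := summable_G hq0 hq1
  set C1 := 2 * A * K + 8 * (1 + A) ^ 2 + 2 * K ^ 2 with hC1
  refine ⟨C1 * ∑' k, G k + 4, ?_, ?_⟩
  · have : 0 ≤ ∑' k, G k := tsum_nonneg fun k => by positivity
    positivity
  intro ε hε hε1 κ hκ c d hc hd x hx hxx0
  have hx1 : x < 1 := by nlinarith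
  set δ := (1 - x) / (1 + x) with hδ
  have hδ0 : 0 ≤ δ := div_nonneg (by linarith) (by linarith)
  have hδ1 : δ ≤ 1 := by rw [hδ, div_le_one (by linarith)]; linarith
  set x' := x * (1 - ε * (1 - x) / (1 + x)) with hx'
  have hx'e : x' = x - ε * δ * x := by rw [hx', hδ]; ring
  have hx'0 : 0 ≤ x' := by
    rw [hx'e]; have : ε * δ ≤ 1 := by nlinarith
    nlinarith
  have hx'x : x' ≤ x := by rw [hx'e]; nlinarith [mul_nonneg (mul_nonneg hε hδ0) hx]
  have hk2 : ∀ k : ℕ, (1:ℝ) ≤ ((k:ℝ) + 2) ^ 2 := fun k => by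
    nlinarith [Nat.cast_nonneg (α := ℝ) k]
  have hxn : ∀ k : ℕ, 0 ≤ x ^ (k + 1) := fun k => by positivity
  have hvb := vSeq_bound hκ hA hR hR1 hc
  have hub := uSeq_bound hκ hA hR hR1 hc
  have hvG : ∀ k : ℕ, ((k:ℝ) + 1) * ‖vSeq κ c k‖ ^ 2 * x ^ (k + 1) ≤ (2 * (1 + A)) ^ 2 * G k := fun k =>
    term_bound hR hx hxx0 (norm_nonneg _) k (by positivity) le_rfl (by simpa using hvb k)
  have hvs : Summable (fun k => ‖vSeq κ c k‖ ^ 2 * x ^ (k + 1)) := by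
    refine Summable.of_nonneg_of_le (fun k => by positivity) (fun k => ?_)
      (hGs.mul_left ((2 * (1 + A)) ^ 2))
    refine le_trans ?_ (hvG k)
    have : 0 ≤ ‖vSeq κ c k‖ ^ 2 * x ^ (k + 1) := by positivity
    nlinarith [mul_nonneg (Nat.cast_nonneg (α := ℝ) k) this]
  set a : ℕ → ℝ := fun k => ‖uSeq κ c k‖ ^ 2 with ha
  have has : Summable (fun k => a (k + 1) * x ^ (k + 1)) := by
    refine Summable.of_nonneg_of_le (fun k => by positivity) (fun k => ?_)
      (hGs.mul_left ((1 + A) ^ 2))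
    have h1 := term_bound hR hx hxx0 (norm_nonneg _) k (by positivity) le_rfl
      (t := ‖uSeq κ c (k + 1)‖) (A := 1 + A) (by
        have := hub (k + 1); push_cast at this
        rw [show (k:ℝ) + 1 + 1 = k + 2 by ring] at this; exact this)
    refine le_trans ?_ h1
    have : 0 ≤ a (k + 1) * x ^ (k + 1) := by positivity
    have h2 : ‖uSeq κ c (k + 1)‖ ^ 2 = a (k + 1) := rfl
    rw [h2]
    nlinarith [mul_nonneg (Nat.cast_nonneg (α := ℝ) k) this]
  set T := ∑' k, a (k + 1) * x ^ (k + 1) with hT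
  have hT1 : HasSum (fun k => a (k + 1) * x ^ (k + 1)) T := has.hasSum
  have hT2 : HasSum (fun k => a k * x ^ (k + 1)) (x * (1 + T)) := by
    have : HasSum (fun k => a k * x ^ k) (1 + T) := by
      have h0 : a 0 = 1 := by simp [ha, uSeq]
      have := (hasSum_nat_add_iff (f := fun k => a k * x ^ k) 1).1 hT1
      simpa [h0, add_comm] using this
    have h2 := this.mul_left x
    have e1 : (fun k => a k * x ^ (k + 1)) = fun i => x * (a i * x ^ i) := by funext k; ring
    exact e1 ▸ h2
  have hcs : Summable (fun k : ℕ => ((k:ℝ) + 1) * ‖c (k + 1)‖ ^ 2 * x' ^ (k + 1)) :=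
    summable_DD hA hR hx'0 (by linarith) hc
  -- first-order part from `uv_identities`; everything quadratic in `ε` goes into the majorant `G`
  have key : ∀ k : ℕ, ((k:ℝ) + 1) * ‖d (k + 1)‖ ^ 2 * x ^ (k + 1)
      + ε * δ * (‖vSeq κ c k‖ ^ 2 * x ^ (k + 1))
      ≤ ((k:ℝ) + 1) * ‖c (k + 1)‖ ^ 2 * x' ^ (k + 1)
        + ε * (-2 * (a (k + 1) * x ^ (k + 1)) + 2 * (a k * x ^ (k + 1))
          + 2 * δ * (a (k + 1) * x ^ (k + 1) + a k * x ^ (k + 1))) + ε ^ 2 * (C1 * G k) := by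
    intro k
    obtain ⟨i1, i2⟩ := uv_identities hκ c k
    set e := d (k + 1) - c (k + 1) - ε * vSeq κ c k with he
    have hde : d (k + 1) = c (k + 1) + (ε • vSeq κ c k + e) := by rw [he]; simp
    have n1 : ‖d (k + 1)‖ ^ 2 = ‖c (k + 1)‖ ^ 2
        + 2 * (ε * inner ℝ (c (k + 1)) (vSeq κ c k) + inner ℝ (c (k + 1)) e)
        + ‖ε • vSeq κ c k + e‖ ^ 2 := by
      rw [hde, norm_add_sq_real, inner_add_right, real_inner_smul_right]
    have n2 : inner ℝ (c (k + 1)) e ≤ ‖c (k + 1)‖ * ‖e‖ := real_inner_le_norm _ _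
    have n3 : ‖ε • vSeq κ c k + e‖ ^ 2 ≤ 2 * (ε ^ 2 * ‖vSeq κ c k‖ ^ 2) + 2 * ‖e‖ ^ 2 := by
      have h1 : ‖ε • vSeq κ c k + e‖ ≤ ε * ‖vSeq κ c k‖ + ‖e‖ := by
        refine (norm_add_le _ _).trans ?_
        rw [norm_smul, Real.norm_of_nonneg hε]
      have h2 : ‖ε • vSeq κ c k + e‖ ^ 2 ≤ (ε * ‖vSeq κ c k‖ + ‖e‖) ^ 2 := by gcongr
      nlinarith [sq_nonneg (ε * ‖vSeq κ c k‖ - ‖e‖)]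
    have heb := hd k
    have r1 : ((k:ℝ) + 1) * (‖c (k + 1)‖ * ‖e‖) * x ^ (k + 1) ≤ ε ^ 2 * (A * K * G k) := by
      calc ((k:ℝ) + 1) * (‖c (k + 1)‖ * ‖e‖) * x ^ (k + 1)
          ≤ ((k:ℝ) + 2) ^ 5 * (A / R ^ (k + 1) * (K * ε ^ 2 / R ^ (k + 1))) * x0 ^ (k + 1) := by
            have : (k:ℝ) + 1 ≤ ((k:ℝ) + 2) ^ 5 := by
              calc (k:ℝ) + 1 ≤ k + 2 := by linarith
                _ ≤ _ := le_self_pow₀ (by linarith [Nat.cast_nonneg (α := ℝ) k]) (by norm_num)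
            gcongr
            exact hc k
        _ = _ := by simp only [hG, hq]; rw [div_pow, ← pow_mul]; ring
    have r2 : ((k:ℝ) + 1) * ‖e‖ ^ 2 * x ^ (k + 1) ≤ ε ^ 2 * (K ^ 2 * G k) := by
      have h1 := term_bound hR hx hxx0 (norm_nonneg e) k (A := K * ε ^ 2) (by positivity)
        (hk2 k) (by simpa using heb)
      refine h1.trans ?_
      have : ε ^ 4 ≤ ε ^ 2 := pow_le_pow_of_le_one hε hε1 (by norm_num)
      calc (K * ε ^ 2) ^ 2 * G k = ε ^ 4 * (K ^ 2 * G k) := by ring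
        _ ≤ ε ^ 2 * (K ^ 2 * G k) := by
          have : 0 ≤ K ^ 2 * G k := by positivity
          gcongr
    have r3 := mul_le_mul_of_nonneg_left (hvG k) (sq_nonneg ε)
    have t1 := pow_tangent hx'0 hx'x k
    have t2 : ((k:ℝ) + 1) * ‖c (k + 1)‖ ^ 2 * x ^ (k + 1) ≤ ((k:ℝ) + 1) * ‖c (k + 1)‖ ^ 2 * x' ^ (k + 1)
        + ε * δ * x ^ (k + 1) * (((k:ℝ) + 1) ^ 2 * ‖c (k + 1)‖ ^ 2) := by
      have h1 := mul_le_mul_of_nonneg_left t1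
        (show 0 ≤ ((k:ℝ) + 1) * ‖c (k + 1)‖ ^ 2 by positivity)
      rw [show x - x' = ε * δ * x by rw [hx'e]; ring] at h1
      calc _ ≤ _ := h1
        _ = _ := by ring
    rw [i2] at t2
    have n4 : ((k:ℝ) + 1) * ‖d (k + 1)‖ ^ 2 * x ^ (k + 1) ≤
        ((k:ℝ) + 1) * ‖c (k + 1)‖ ^ 2 * x ^ (k + 1)
        + 2 * ε * (a k - a (k + 1)) * x ^ (k + 1)
        + 2 * (((k:ℝ) + 1) * (‖c (k + 1)‖ * ‖e‖) * x ^ (k + 1))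
        + 2 * (ε ^ 2 * (((k:ℝ) + 1) * ‖vSeq κ c k‖ ^ 2 * x ^ (k + 1)))
        + 2 * (((k:ℝ) + 1) * ‖e‖ ^ 2 * x ^ (k + 1)) := by
      have i1' : ((k:ℝ) + 1) * inner ℝ (c (k + 1)) (vSeq κ c k) = a k - a (k + 1) := i1
      rw [← i1', n1]
      have hw : 0 ≤ ((k:ℝ) + 1) * x ^ (k + 1) := by positivity
      have m2 := mul_le_mul_of_nonneg_left n2 hw
      have m3 := mul_le_mul_of_nonneg_left n3 hw
      linarith
    have i3 : ‖uSeq κ c (k + 1)‖ ^ 2 = a (k + 1) := rfl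
    have i4 : ‖uSeq κ c k‖ ^ 2 = a k := rfl
    rw [i3, i4] at t2
    have fin1 : ε ^ 2 * (C1 * G k) = 2 * (ε ^ 2 * (A * K * G k)) + 2 * (ε ^ 2 * ((2 * (1 + A)) ^ 2 * G k))
       + 2 * (ε ^ 2 * (K ^ 2 * G k)) := by rw [hC1]; ring
    rw [fin1]
    linarith
  have hR2 := (hT1.mul_left (-2)).add (hT2.mul_left 2) |>.add ((hT1.add hT2).mul_left (2 * δ))
    |>.mul_left ε
  have hRHS := (hcs.hasSum.add hR2).add ((hGs.hasSum.mul_left C1).mul_left (ε ^ 2))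
  have hds : Summable (fun k : ℕ => ((k:ℝ) + 1) * ‖d (k + 1)‖ ^ 2 * x ^ (k + 1)) := by
    refine Summable.of_nonneg_of_le (fun k => by positivity) (fun k => ?_) hRHS.summable
    have := key k
    have h0 : 0 ≤ ε * δ * (‖vSeq κ c k‖ ^ 2 * x ^ (k + 1)) := by positivity
    linarith
  have hLHS := hds.hasSum.add (hvs.hasSum.mul_left (ε * δ))
  have hfin := hasSum_le key hLHS hRHS
  refine ⟨?_, hvs⟩
  have hlog := log_step hx hx1 hε
  rw [← hx'] at hlog
  have hbr : -2 * T + 2 * (x * (1 + T)) + 2 * δ * (T + x * (1 + T)) = 4 * (x / (1 + x)) := by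
    rw [hδ]; have : 1 + x ≠ 0 := by positivity
    field_simp; ring
  rw [hbr] at hfin
  unfold EE DD
  have e9 : ε * (4 * (x / (1 + x))) = 4 * (ε * x / (1 + x)) := by ring
  rw [e9] at hfin
  linarith

/-! ### Iteration of the energy estimate along a chain -/

/-- `Reach ε n L`: the function `L` arises from `0` by `n` steps of size `ε` with unimodular parameters. -/
inductive Reach (ε : ℝ) : ℕ → (ℂ → ℂ) → Prop
  | zero : Reach ε 0 (fun _ => 0)
  | step {n : ℕ} {L : ℂ → ℂ} {κ : ℂ} : ‖κ‖ = 1 → Reach ε n L →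
      Reach ε (n + 1) (fun z => L (blB ε κ z) + blL ε κ z)

lemma norm_moebius_le {a : ℝ} (ha1 : |a| ≤ 1) {w : ℂ} (hw : ‖w‖ ≤ 1) :
    ‖(a:ℂ) + w‖ ≤ ‖1 + (a:ℂ) * w‖ := by
  have h1 : a ^ 2 ≤ 1 := by rw [← sq_abs]; exact pow_le_one₀ (abs_nonneg _) ha1
  have h2 : ‖w‖ ^ 2 ≤ 1 := pow_le_one₀ (norm_nonneg _) hw
  rw [← sq_le_sq₀ (norm_nonneg _) (norm_nonneg _)]
  rw [Complex.sq_norm, normSq_apply] at *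
  rw [Complex.sq_norm, normSq_apply]
  simp only [add_re, one_re, mul_re, ofReal_re, ofReal_im, add_im, one_im, mul_im] at *
  nlinarith [mul_nonneg (sub_nonneg.2 h1) (sub_nonneg.2 h2)]

lemma cexp_real_neg (ε : ℝ) : Complex.exp (-(ε:ℂ)) = ((Real.exp (-ε) : ℝ) : ℂ) := by
  push_cast; rfl

lemma norm_expneg_mul {ε : ℝ} (hε : 0 < ε) {w : ℂ} (hw : ‖w‖ < 1) :
    ‖Complex.exp (-(ε:ℂ)) * w‖ < 1 := by
  rw [cexp_real_neg, norm_mul, Complex.norm_real, Real.norm_of_nonneg (Real.exp_pos _).le]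
  have : Real.exp (-ε) ≤ 1 := Real.exp_le_one_iff.2 (by linarith)
  nlinarith [norm_nonneg w, Real.exp_pos (-ε)]

lemma norm_exppos_mul {ε : ℝ} {w : ℂ} (hw : ‖w‖ < Real.exp (-ε)) :
    ‖Complex.exp (ε:ℂ) * w‖ < 1 := by
  rw [← Complex.ofReal_exp, norm_mul, Complex.norm_real, Real.norm_of_nonneg (Real.exp_pos _).le]
  rw [Real.exp_neg] at hw
  have := mul_lt_mul_of_pos_left hw (Real.exp_pos ε)
  rwa [mul_inv_cancel₀ (Real.exp_pos ε).ne'] at this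

lemma blB_norm_le {ε : ℝ} (hε : 0 < ε) {κ z : ℂ} (hκ : ‖κ‖ = 1) (hz : ‖z‖ < 1) :
    ‖blB ε κ z‖ ≤ ‖z‖ := by
  have hw : ‖κ * z‖ < 1 := by rw [norm_mul, hκ, one_mul]; exact hz
  have hne : 0 < ‖1 + Complex.exp (-(ε:ℂ)) * (κ * z)‖ :=
    norm_pos_iff.2 (one_add_ne (norm_expneg_mul hε hw))
  unfold blB
  rw [norm_div, norm_mul, div_le_iff₀ hne, cexp_real_neg]
  gcongr
  refine norm_moebius_le ?_ hw.le
  rw [abs_of_pos (Real.exp_pos _)]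
  exact Real.exp_le_one_iff.2 (by linarith)

lemma exp_blL {ε : ℝ} (hε : 0 < ε) {κ z : ℂ} (hκ : ‖κ‖ = 1) (hz : ‖z‖ < Real.exp (-ε)) :
    Complex.exp (blL ε κ z) = (1 + Complex.exp (ε:ℂ) * (κ * z)) / (1 + Complex.exp (-(ε:ℂ)) * (κ * z)) := by
  have hw : ‖κ * z‖ < Real.exp (-ε) := by rw [norm_mul, hκ, one_mul]; exact hz
  have hw1 : ‖κ * z‖ < 1 := hw.trans_le (Real.exp_le_one_iff.2 (by linarith))
  unfold blL
  rw [Complex.exp_sub, Complex.exp_log (one_add_ne (norm_exppos_mul hw)),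
    Complex.exp_log (one_add_ne (norm_expneg_mul hε hw1))]

/-- `Re ℓ_ε ≤ ε`, which holds because `|B_ε(z)| ≤ |z|`. -/
lemma blL_re_le {ε : ℝ} (hε : 0 < ε) {κ z : ℂ} (hκ : ‖κ‖ = 1) (hz : ‖z‖ < Real.exp (-ε)) :
    (blL ε κ z).re ≤ ε := by
  have hw : ‖κ * z‖ < Real.exp (-ε) := by rw [norm_mul, hκ, one_mul]; exact hz
  have hw1 : ‖κ * z‖ < 1 := hw.trans_le (Real.exp_le_one_iff.2 (by linarith))
  have hne : 0 < ‖1 + Complex.exp (-(ε:ℂ)) * (κ * z)‖ :=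
    norm_pos_iff.2 (one_add_ne (norm_expneg_mul hε hw1))
  rw [← Real.exp_le_exp, ← Complex.norm_exp, exp_blL hε hκ hz, norm_div, div_le_iff₀ hne]
  have h1 : 1 + Complex.exp (ε:ℂ) * (κ * z) = Complex.exp ε * (Complex.exp (-(ε:ℂ)) + κ * z) := by
    rw [mul_add, ← Complex.exp_add]; simp
  rw [h1, norm_mul, ← Complex.ofReal_exp, Complex.norm_real, Real.norm_of_nonneg (Real.exp_pos _).le,
    cexp_real_neg]
  gcongr
  refine norm_moebius_le ?_ hw1.le
  rw [abs_of_pos (Real.exp_pos _)]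
  exact Real.exp_le_one_iff.2 (by linarith)

lemma blB_diff {ε : ℝ} (hε : 0 < ε) {κ : ℂ} (hκ : ‖κ‖ = 1) :
    DifferentiableOn ℂ (blB ε κ) (ball 0 1) := by
  unfold blB
  apply DifferentiableOn.div (by fun_prop) (by fun_prop)
  intro z hz
  refine one_add_ne (norm_expneg_mul hε ?_)
  rw [norm_mul, hκ, one_mul]; simpa using hz

lemma blL_diff {ε : ℝ} (hε : 0 < ε) {κ : ℂ} (hκ : ‖κ‖ = 1) :
    DifferentiableOn ℂ (blL ε κ) (ball 0 (Real.exp (-ε))) := by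
  have hw : ∀ z ∈ ball (0:ℂ) (Real.exp (-ε)), ‖κ * z‖ < Real.exp (-ε) := fun z hz => by
    rw [norm_mul, hκ, one_mul]; simpa using hz
  have e1 : Real.exp (-ε) ≤ 1 := Real.exp_le_one_iff.2 (by linarith)
  unfold blL
  apply DifferentiableOn.sub
  · apply DifferentiableOn.clog (by fun_prop)
    intro t ht; exact one_add_slit (norm_exppos_mul (hw t ht))
  · apply DifferentiableOn.clog (by fun_prop)
    intro t ht; exact one_add_slit (norm_expneg_mul hε ((hw t ht).trans_le e1))

lemma blB_maps {ε : ℝ} (hε : 0 < ε) {κ : ℂ} (hκ : ‖κ‖ = 1) {r : ℝ} (hr : r ≤ 1) :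
    Set.MapsTo (blB ε κ) (ball 0 r) (ball 0 r) := by
  intro z hz
  simp only [mem_ball_zero_iff] at hz ⊢
  exact (blB_norm_le hε hκ (by linarith)).trans_lt hz

lemma Reach.props {ε : ℝ} (hε : 0 < ε) {n : ℕ} {L : ℂ → ℂ} (h : Reach ε n L) :
    DifferentiableOn ℂ L (ball 0 (Real.exp (-ε))) ∧ L 0 = 0 ∧
      ∀ z ∈ ball (0:ℂ) (Real.exp (-ε)), (L z).re ≤ n * ε := by
  have e1 : Real.exp (-ε) ≤ 1 := Real.exp_le_one_iff.2 (by linarith)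
  induction h with
  | zero => exact ⟨differentiableOn_const _, rfl, by simp⟩
  | @step n L κ hκ h ih =>
    obtain ⟨i1, i2, i3⟩ := ih
    refine ⟨?_, ?_, fun z hz => ?_⟩
    · exact (i1.comp ((blB_diff hε hκ).mono (ball_subset_ball e1)) (blB_maps hε hκ e1)).add
        (blL_diff hε hκ)
    · simp [blB, blL, i2]
    · have h1 := i3 _ (blB_maps hε hκ e1 hz)
      have h2 := blL_re_le hε hκ (z := z) (by simpa using hz)
      simp only [add_re]; push_cast; linarith

/-- Uniform bound for all functions reached within total time `Λ`, by Borel–Carathéodory. -/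
lemma Reach.bound {ε R R' Λ : ℝ} (hε : 0 < ε) (hR : 0 < R) (hRR : R < R') (hR' : R' ≤ Real.exp (-ε))
    (hΛ : 0 < Λ) {n : ℕ} {L : ℂ → ℂ} (h : Reach ε n L) (hn : n * ε ≤ Λ) :
    DifferentiableOn ℂ L (ball 0 R) ∧ ∀ z ∈ ball (0:ℂ) R, ‖L z‖ ≤ 2 * Λ * R / (R' - R) := by
  obtain ⟨h1, h2, h3⟩ := h.props hε
  have hsub : ball (0:ℂ) R' ⊆ ball 0 (Real.exp (-ε)) := ball_subset_ball hR'
  refine ⟨(h1.mono hsub).mono (ball_subset_ball hRR.le), fun z hz => ?_⟩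
  have hz' : ‖z‖ < R := by simpa using hz
  have := Complex.borelCaratheodory_zero hΛ (h1.mono hsub)
    (fun w hw => (h3 w (hsub hw)).trans hn) (by linarith) (ball_subset_ball hRR.le hz) h2
  refine this.trans ?_
  gcongr

set_option maxHeartbeats 1600000 in
/-- Energy estimate along a chain. The first part is the bound `O(ε)` in total. In the second part,
if the final coefficients are close to a sequence `cs` near which the velocity is bounded below
by `η`, then the last `i` steps all took place near `cs`, because coefficients move with speed at
most `C0 + 1`, and each lowers the energy by a fixed multiple of `ε`. The argument `x` shrinks by at
most `ε` per step backwards, so it stays above `xs`. -/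
lemma chain {R1 R R' x0 xs Λ θ η C0 : ℝ} {m : ℕ} {cs : ℕ → ℂ} (hR1 : 0 < R1) (hR1R : R1 < R)
    (hRR : R < R') (hR' : R' < 1) (hxs : 0 < xs) (hxs0 : xs < x0) (hx0R : x0 < R1 ^ 2)
    (hΛ : 0 < Λ) (hθ1 : θ ≤ 1) (hη : 0 < η) (hC0 : 0 ≤ C0)
    (hdef : ∀ κ : ℂ, ‖κ‖ = 1 → ∀ c : ℕ → ℂ, (∀ k < m, ‖c (k + 1) - cs (k + 1)‖ ≤ θ) →
      η ≤ ∑ k ∈ Finset.range m, ‖vSeq κ c k‖ ^ 2)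
    (hC : ∀ κ : ℂ, ‖κ‖ = 1 → ∀ c : ℕ → ℂ, (∀ k < m, ‖c (k + 1) - cs (k + 1)‖ ≤ 2) →
      ∀ k < m, ‖vSeq κ c k‖ ≤ C0) :
    ∃ K' > 0, ∃ ε0 > 0, ∀ ε : ℝ, 0 < ε → ε ≤ ε0 → ∀ n L, Reach ε n L → n * ε ≤ Λ →
      (∀ x, 0 ≤ x → x ≤ x0 → EE (co L) x ≤ n * (K' * ε ^ 2)) ∧
      ∀ i ≤ n, ∀ x, xs + i * ε ≤ x → x ≤ x0 →
        (∀ k < m, ‖co L (k + 1) - cs (k + 1)‖ ≤ θ - i * ε * (C0 + 1)) →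
        EE (co L) x ≤ n * (K' * ε ^ 2) - i * ε * ((1 - x0) / 2 * xs ^ m * η) := by
  set A := 2 * Λ * R / (R' - R) with hA
  have hR0 : 0 < R := hR1.trans hR1R
  have hA0 : 0 ≤ A := div_nonneg (by positivity) (by linarith)
  have hx01 : x0 < 1 := by nlinarith
  obtain ⟨K, hK, e1, he1, hstep⟩ := step_coeff hR1 hR1R (by linarith) A hA0
  obtain ⟨K', hK', halg⟩ := alg_step hA0 hK.le hR1 (by linarith) (by linarith) hx0R
  set W := (2 * (1 + A) * ((m:ℝ) + 2) ^ 2 + K) / R1 ^ (m + 1) with hW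
  have hW0 : 0 < W := by positivity
  refine ⟨K', hK', min (min e1 1) (min (-Real.log R') (1 / W)), ?_, ?_⟩
  · have : 0 < -Real.log R' := by
      have := Real.log_neg (show 0 < R' by linarith) hR'; linarith
    positivity
  intro ε hε hεle n L hL
  have hεe1 : ε ≤ e1 := hεle.trans ((min_le_left _ _).trans (min_le_left _ _))
  have hε1 : ε ≤ 1 := hεle.trans ((min_le_left _ _).trans (min_le_right _ _))
  have hεR : R' ≤ Real.exp (-ε) := by
    have : ε ≤ -Real.log R' := hεle.trans ((min_le_right _ _).trans (min_le_left _ _))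
    rw [← Real.log_le_iff_le_exp (by linarith)]; linarith
  have hεW : ε * W ≤ 1 := by
    have : ε ≤ 1 / W := hεle.trans ((min_le_right _ _).trans (min_le_right _ _))
    rwa [le_div_iff₀ hW0] at this
  induction hL with
  | zero =>
    intro _
    have h0 : ∀ x, 0 ≤ x → x ≤ x0 → EE (co fun _ => 0) x ≤ 0 := by
      intro x hx hxx
      have : ∀ k, co (fun _ => 0) k = 0 := fun k => by
        simp [co]
      simp only [EE, DD, this]
      have := Real.log_nonpos (x := 1 - x) (by linarith) (by linarith)
      simp; linarith
    refine ⟨fun x hx hxx => by simpa using h0 x hx hxx, fun i hi x hx hxx _ => ?_⟩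
    have : i = 0 := by omega
    subst this
    simp at hx ⊢
    exact h0 x (by linarith) hxx
  | @step n L κ hκ h ih =>
    intro hn
    push_cast at hn
    obtain ⟨ih1, ih2⟩ := ih (by linarith)
    obtain ⟨hd, hb⟩ := h.bound hε hR0 hRR hεR hΛ (by linarith)
    have hco : ∀ k, ‖co L (k + 1)‖ ≤ A / R1 ^ (k + 1) := fun k =>
      co_bound hR1 hR1R hd (fun z hz => hb z (by simp at hz ⊢; linarith)) (k + 1)
    have hst := hstep ε hε hεe1 κ hκ L hd hb
    set d := co (fun z => L (blB ε κ z) + blL ε κ z) with hdd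
    have hal := halg ε hε.le hε1 κ hκ (co L) d hco hst
    have hx' : ∀ x, 0 ≤ x → x ≤ x0 → 0 ≤ x * (1 - ε * (1 - x) / (1 + x)) ∧
        x - ε ≤ x * (1 - ε * (1 - x) / (1 + x)) ∧ x * (1 - ε * (1 - x) / (1 + x)) ≤ x ∧
        (1 - x0) / 2 ≤ (1 - x) / (1 + x) := by
      intro x hx hxx
      have q0 : 0 ≤ (1 - x) / (1 + x) := div_nonneg (by linarith) (by linarith)
      have q1 : (1 - x) / (1 + x) ≤ 1 := by rw [div_le_one (by linarith)]; linarith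
      have q2 : (1 - x0) / 2 ≤ (1 - x) / (1 + x) := by
        apply div_le_div₀ <;> linarith
      have q3 : ε * (1 - x) / (1 + x) = ε * ((1 - x) / (1 + x)) := by ring
      rw [q3]
      set δ := (1 - x) / (1 + x)
      have q4 : 0 ≤ ε * δ := by positivity
      have q5 : ε * δ ≤ ε := by nlinarith
      refine ⟨?_, ?_, ?_, q2⟩ <;> nlinarith
    have part1 : ∀ x, 0 ≤ x → x ≤ x0 → EE d x ≤ ((n + 1 : ℕ) : ℝ) * (K' * ε ^ 2) := by
      intro x hx hxx
      obtain ⟨p1, p2, p3, p4⟩ := hx' x hx hxx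
      have h1 := (hal x hx hxx).1
      have h2 := ih1 _ p1 (by linarith)
      have h3 : 0 ≤ ε * ((1 - x) / (1 + x)) * ∑' k, ‖vSeq κ (co L) k‖ ^ 2 * x ^ (k + 1) := by
        refine mul_nonneg (mul_nonneg hε.le (by linarith)) (tsum_nonneg fun k => by positivity)
      push_cast; linarith
    refine ⟨part1, fun i hi x hx hxx hclose => ?_⟩
    rcases i with _ | i
    · simp only [Nat.cast_zero, zero_mul, add_zero, sub_zero] at hx ⊢
      exact part1 x (by linarith) hxx
    push_cast at hx hclose ⊢
    have hiε : 0 ≤ (i:ℝ) * ε := by positivity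
    have hxp : 0 ≤ x := by linarith
    obtain ⟨p1, p2, p3, p4⟩ := hx' x hxp hxx
    obtain ⟨h1, hvs⟩ := hal x hxp hxx
    -- the previous coefficients are within `ε (C0 + 1)` of the new ones, hence still close to `cs`
    have hpow : ∀ k < m, R1 ^ (m + 1) ≤ R1 ^ (k + 1) := fun k hk =>
      pow_le_pow_of_le_one hR1.le (by linarith) (by omega)
    have hdiff : ∀ k < m, ‖d (k + 1) - co L (k + 1)‖ ≤ ε * ‖vSeq κ (co L) k‖ + K * ε ^ 2 / R1 ^ (k + 1) := by
      intro k _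
      have := norm_add_le (d (k + 1) - co L (k + 1) - ε * vSeq κ (co L) k) (ε * vSeq κ (co L) k)
      rw [sub_add_cancel, norm_mul, Complex.norm_real, Real.norm_of_nonneg hε.le] at this
      linarith [hst k]
    have hKε : ∀ k < m, K * ε ^ 2 / R1 ^ (k + 1) ≤ ε * (ε * (K / R1 ^ (m + 1))) := by
      intro k hk
      calc K * ε ^ 2 / R1 ^ (k + 1) ≤ K * ε ^ 2 / R1 ^ (m + 1) := by
            apply div_le_div_of_nonneg_left (by positivity) (by positivity) (hpow k hk)
        _ = _ := by ring
    have hWsplit : W = 2 * (1 + A) * ((m:ℝ) + 2) ^ 2 / R1 ^ (m + 1) + K / R1 ^ (m + 1) := by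
      rw [hW, add_div]
    have hK1 : ε * (K / R1 ^ (m + 1)) ≤ 1 := by
      refine le_trans ?_ hεW
      rw [hWsplit]; gcongr
      have : 0 ≤ 2 * (1 + A) * ((m:ℝ) + 2) ^ 2 / R1 ^ (m + 1) := by positivity
      linarith
    have hcrude : ∀ k < m, ‖d (k + 1) - co L (k + 1)‖ ≤ 1 := by
      intro k hk
      refine (hdiff k hk).trans (le_trans ?_ hεW)
      have v1 := vSeq_bound hκ hA0 hR1 (by linarith) hco k
      have v2 : 2 * (1 + A) * ((k:ℝ) + 2) ^ 2 / R1 ^ (k + 1)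
          ≤ 2 * (1 + A) * ((m:ℝ) + 2) ^ 2 / R1 ^ (m + 1) := by
        have hkm : (k:ℝ) ≤ m := by exact_mod_cast hk.le
        refine div_le_div₀ (by positivity) ?_ (by positivity) (hpow k hk)
        gcongr
      have v3 : ε * (ε * (K / R1 ^ (m + 1))) ≤ ε * (K / R1 ^ (m + 1)) := by
        have : 0 ≤ ε * (K / R1 ^ (m + 1)) := by positivity
        nlinarith
      have v4 := hKε k hk
      have v5 := mul_le_mul_of_nonneg_left (v1.trans v2) hε.le
      rw [hWsplit, mul_add]; linarith
    have htri : ∀ k, ‖co L (k + 1) - cs (k + 1)‖ ≤ ‖d (k + 1) - co L (k + 1)‖ + ‖d (k + 1) - cs (k + 1)‖ := by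
      intro k
      have := norm_sub_le (d (k + 1) - cs (k + 1)) (d (k + 1) - co L (k + 1))
      rw [sub_sub_sub_cancel_left] at this
      linarith
    have hvC : ∀ k < m, ‖vSeq κ (co L) k‖ ≤ C0 := by
      refine hC κ hκ (co L) (fun k hk => ?_)
      have h5 := hclose k hk
      have h6 := hcrude k hk
      have h7 : 0 ≤ ((i:ℝ) + 1) * ε * (C0 + 1) := by positivity
      linarith [htri k]
    have hclose' : ∀ k < m, ‖co L (k + 1) - cs (k + 1)‖ ≤ θ - i * ε * (C0 + 1) := by
      intro k hk
      have h5 := hclose k hk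
      have h6 := hdiff k hk
      have h7 := mul_le_mul_of_nonneg_left (hvC k hk) hε.le
      have h8 := hKε k hk
      have h9 := mul_le_mul_of_nonneg_left hK1 hε.le
      linarith [htri k]
    have hθ' : ∀ k < m, ‖co L (k + 1) - cs (k + 1)‖ ≤ θ := by
      intro k hk
      have : 0 ≤ (i:ℝ) * ε * (C0 + 1) := by positivity
      linarith [hclose' k hk]
    have hdf := hdef κ hκ (co L) hθ'
    have hxs' : xs ≤ x := by nlinarith
    have hsum : xs ^ m * η ≤ ∑' k, ‖vSeq κ (co L) k‖ ^ 2 * x ^ (k + 1) := by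
      refine le_trans ?_ (hvs.sum_le_tsum (Finset.range m) (fun k _ => by positivity))
      refine (mul_le_mul_of_nonneg_left hdf (by positivity)).trans ?_
      rw [Finset.mul_sum]
      refine Finset.sum_le_sum fun k hk => ?_
      rw [mul_comm]
      gcongr
      calc xs ^ m ≤ xs ^ (k + 1) :=
            pow_le_pow_of_le_one hxs.le (by linarith) (by have := Finset.mem_range.1 hk; omega)
        _ ≤ x ^ (k + 1) := by gcongr
    have hfin := ih2 i (by omega) (x * (1 - ε * (1 - x) / (1 + x))) (by linarith)
      (by linarith) hclose'
    have hgain : ε * ((1 - x0) / 2 * xs ^ m * η) ≤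
        ε * ((1 - x) / (1 + x)) * ∑' k, ‖vSeq κ (co L) k‖ ^ 2 * x ^ (k + 1) := by
      rw [mul_assoc ε, mul_assoc ((1 - x0) / 2)]
      refine mul_le_mul_of_nonneg_left ?_ hε.le
      refine mul_le_mul p4 hsum (by positivity) (by linarith)
    linarith

/-! ### The Koebe osculation step -/

/-- A zero-free holomorphic function on the disk has a holomorphic logarithm with prescribed value
at `0`. -/
lemma exists_log {Φ : ℂ → ℂ} (hΦ : DifferentiableOn ℂ Φ (ball 0 1))
    (h0 : ∀ z ∈ ball (0:ℂ) 1, Φ z ≠ 0) {y : ℂ} (hy : Complex.exp y = Φ 0) :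
    ∃ l : ℂ → ℂ, DifferentiableOn ℂ l (ball 0 1) ∧ l 0 = y ∧
      ∀ z ∈ ball (0:ℂ) 1, Complex.exp (l z) = Φ z := by
  have hd : DifferentiableOn ℂ (fun z => deriv Φ z / Φ z) (ball 0 1) :=
    (hΦ.deriv isOpen_ball).div hΦ h0
  obtain ⟨l, hl0, hl⟩ := (hd.isExactOn_ball).with_val_at 0 y
  have hld : DifferentiableOn ℂ l (ball 0 1) :=
    fun z hz => (hl z hz).differentiableAt.differentiableWithinAt
  refine ⟨l, hld, hl0, fun z hz => ?_⟩
  have hmem0 : (0:ℂ) ∈ ball (0:ℂ) 1 := mem_ball_self one_pos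
  have hder : ∀ x ∈ ball (0:ℂ) 1, HasDerivAt (fun z => Φ z * Complex.exp (-l z)) 0 x := by
    intro x hx
    have h1 := (hΦ.differentiableAt (isOpen_ball.mem_nhds hx)).hasDerivAt
    have h2 := (hl x hx).fun_neg.cexp
    refine (h1.fun_mul h2).congr_deriv ?_
    have := h0 x hx
    field_simp
    ring
  have hc := isOpen_ball.is_const_of_deriv_eq_zero (convex_ball (0:ℂ) 1).isPreconnected
    (fun x hx => (hder x hx).differentiableAt.differentiableWithinAt)
    (fun x hx => (hder x hx).deriv) hz hmem0
  simp only [hl0, ← hy] at hc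
  rw [← Complex.exp_add, add_neg_cancel, Complex.exp_zero] at hc
  rw [Complex.exp_neg] at hc
  field_simp at hc
  exact hc.symm

/-- Two branches of a logarithm that agree at `0` agree everywhere. -/
lemma log_unique {F : ℂ → ℂ} {r : ℝ} (hF : DifferentiableOn ℂ F (ball 0 r)) (h0 : F 0 = 0)
    (h : ∀ z ∈ ball (0:ℂ) r, Complex.exp (F z) = 1) {z : ℂ} (hz : z ∈ ball (0:ℂ) r) : F z = 0 := by
  have hr : 0 < r := pos_of_mem_ball hz
  have hder : ∀ x ∈ ball (0:ℂ) r, deriv F x = 0 := by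
    intro x hx
    have h1 := (hF.differentiableAt (isOpen_ball.mem_nhds hx)).hasDerivAt.cexp
    have h2 : (fun z => Complex.exp (F z)) =ᶠ[𝓝 x] fun _ => 1 := by
      filter_upwards [isOpen_ball.mem_nhds hx] with w hw using h w hw
    have h3 := (h1.congr_of_eventuallyEq h2.symm).unique (hasDerivAt_const x (1:ℂ))
    simpa [Complex.exp_ne_zero] using h3
  rw [isOpen_ball.is_const_of_deriv_eq_zero (convex_ball (0:ℂ) r).isPreconnected hF
    (fun x hx => hder x hx) hz (mem_ball_self hr), h0]

/-- The function `h(z) = a z e^{lam(z)}`. -/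
noncomputable def hF (a : ℝ) (lam : ℂ → ℂ) (z : ℂ) : ℂ := (a:ℂ) * z * Complex.exp (lam z)

/-- State of the osculation process after `N` steps of size `ε`, started from `A z e^{g(z)}`. The map
`h(z) = e^{Nε} A z e^{lam(z)}` is a univalent self-map of the disk, and `g = L ∘ h + lam` near `0`, where
`L` is the function accumulated by the steps done so far. -/
structure Osc (ε A : ℝ) (g : ℂ → ℂ) (N : ℕ) (L lam : ℂ → ℂ) : Prop where
  reach : Reach ε N L
  diff : DifferentiableOn ℂ lam (ball 0 1)
  zero : lam 0 = 0
  inj : Set.InjOn (hF (Real.exp (N * ε) * A) lam) (ball 0 1)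
  maps : Set.MapsTo (hF (Real.exp (N * ε) * A) lam) (ball 0 1) (ball 0 1)
  eqn : ∀ z ∈ ball (0:ℂ) (Real.exp (-ε)), g z = L (hF (Real.exp (N * ε) * A) lam z) + lam z

lemma hF_diff {a : ℝ} {lam : ℂ → ℂ} {r : ℝ} (h : DifferentiableOn ℂ lam (ball 0 r)) :
    DifferentiableOn ℂ (hF a lam) (ball 0 r) := by
  unfold hF; fun_prop

lemma hF_deriv_zero {a : ℝ} {lam : ℂ → ℂ} (h : DifferentiableOn ℂ lam (ball 0 1)) (h0 : lam 0 = 0) :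
    deriv (hF a lam) 0 = a := by
  have h1 := (h.differentiableAt (isOpen_ball.mem_nhds (mem_ball_self one_pos))).hasDerivAt.cexp
  have h2 := (((hasDerivAt_id (0:ℂ)).const_mul (a:ℂ)).fun_mul h1).deriv
  unfold hF
  simp only [id] at h2
  rw [h2, h0]; simp

lemma disk_aut {t : ℝ} (ht : |t| < 1) {w : ℂ} (hw : ‖w‖ < 1) :
    ‖((t:ℂ) + w) / (1 + t * w)‖ < 1 := by
  have h1 : ‖(t:ℂ) * w‖ < 1 := by
    rw [norm_mul, Complex.norm_real, Real.norm_eq_abs]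
    nlinarith [abs_nonneg t, norm_nonneg w]
  have hne : 0 < ‖1 + (t:ℂ) * w‖ := norm_pos_iff.2 (one_add_ne h1)
  rw [norm_div, div_lt_one hne]
  have h1 : t ^ 2 < 1 := by rw [← sq_abs]; nlinarith [abs_nonneg t]
  have h2 : ‖w‖ ^ 2 < 1 := by nlinarith [norm_nonneg w]
  rw [← sq_lt_sq₀ (norm_nonneg _) (norm_nonneg _)]
  rw [Complex.sq_norm, normSq_apply] at *
  rw [Complex.sq_norm, normSq_apply]
  simp only [add_re, one_re, mul_re, ofReal_re, ofReal_im, add_im, one_im, mul_im] at *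
  nlinarith [mul_pos (sub_pos.2 h1) (sub_pos.2 h2)]

/-- If the disk automorphisms `w ↦ (t + w) / (1 + t w)` and `h ↦ (t² + h) / (1 + t² h)` are intertwined by
squaring, then `h = w (b + w) / (1 + b w)` with `b = 2 t / (1 + t²)`. -/
lemma osc_alg {t b w h : ℂ} (hb : b * (1 + t ^ 2) = 2 * t) (h1 : 1 + t * w ≠ 0)
    (h2 : 1 + b * w ≠ 0) (h3 : 1 + t ^ 2 * h ≠ 0) (h4 : 1 - t ^ 4 ≠ 0)
    (e : ((t + w) / (1 + t * w)) ^ 2 = (t ^ 2 + h) / (1 + t ^ 2 * h)) :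
    w * (b + w) / (1 + b * w) = h := by
  rw [div_pow, div_eq_div_iff (pow_ne_zero 2 h1) h3] at e
  rw [div_eq_iff h2]
  apply mul_left_cancel₀ h4
  -- both sides are affine in `h`; `b` is eliminated through `b (1 + t²) = 2 t`
  linear_combination e + (w * (1 - t^2) - h * (1-t^2) * w) * hb

/-- One osculation step. If `h` omits `p` with `|p| = t²`, then the automorphism sending `p` to `0`,
followed by a square root and the automorphism sending the new value at the origin back to `0`,
produces a univalent self-map `k` of the disk with `κ h = k (b + k) / (1 + b k)`, `b = e^{-ε}`. -/
lemma osc_step {t ε A : ℝ} (ht : 0 < t) (ht1 : t < 1) (hb : Real.exp (-ε) * (1 + t ^ 2) = 2 * t)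
    {g : ℂ → ℂ} {N : ℕ} {L lam : ℂ → ℂ} (H : Osc ε A g N L lam)
    {p : ℂ} (hp : ‖p‖ = t ^ 2)
    (homit : ∀ z ∈ ball (0:ℂ) 1, hF (Real.exp (N * ε) * A) lam z ≠ p) :
    ∃ L' lam', Osc ε A g (N + 1) L' lam' := by
  have hε : 0 < ε := by
    have : Real.exp (-ε) < 1 := by nlinarith [sq_nonneg (1 - t), sq_pos_of_pos (sub_pos.2 ht1)]
    have := Real.exp_lt_one_iff.1 this
    linarith
  set b : ℝ := Real.exp (-ε) with hbdef
  have hb0 : 0 < b := Real.exp_pos _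
  have hb1 : b < 1 := Real.exp_lt_one_iff.2 (by linarith)
  have t2 : (0:ℝ) < t ^ 2 := by positivity
  have t21 : t ^ 2 < 1 := by nlinarith
  set h := hF (Real.exp (N * ε) * A) lam with hh
  have hhd : DifferentiableOn ℂ h (ball 0 1) := hF_diff H.diff
  have hh0 : h 0 = 0 := by simp [hh, hF]
  set κ : ℂ := (starRingEnd ℂ) (-p / (t ^ 2 : ℝ)) with hκdef
  have hκ : ‖κ‖ = 1 := by
    rw [hκdef, RCLike.norm_conj, norm_div, norm_neg, hp, Complex.norm_real,
      Real.norm_of_nonneg t2.le, div_self t2.ne']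
  have hκκ : (starRingEnd ℂ) κ * κ = 1 := by
    rw [← Complex.normSq_eq_conj_mul_self, Complex.normSq_eq_norm_sq, hκ]; simp
  have hκp : (starRingEnd ℂ) κ * (t ^ 2 : ℝ) = -p := by
    rw [hκdef, Complex.conj_conj, div_mul_cancel₀]
    exact_mod_cast t2.ne'
  have hlt : ∀ z ∈ ball (0:ℂ) 1, ‖κ * h z‖ < 1 := fun z hz => by
    rw [norm_mul, hκ, one_mul]; simpa using H.maps hz
  have hden : ∀ z ∈ ball (0:ℂ) 1, 1 + ((t^2 : ℝ):ℂ) * (κ * h z) ≠ 0 := fun z hz => by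
    apply one_add_ne
    rw [norm_mul, Complex.norm_real, Real.norm_of_nonneg t2.le]
    nlinarith [hlt z hz, norm_nonneg (κ * h z)]
  set Φ : ℂ → ℂ := fun z => (((t^2 : ℝ):ℂ) + κ * h z) / (1 + ((t^2 : ℝ):ℂ) * (κ * h z)) with hΦ
  have hΦd : DifferentiableOn ℂ Φ (ball 0 1) := by
    refine DifferentiableOn.div (by fun_prop) (by fun_prop) hden
  have hΦ0 : Φ 0 = ((t^2 : ℝ):ℂ) := by simp [hΦ, hh0]
  have hΦne : ∀ z ∈ ball (0:ℂ) 1, Φ z ≠ 0 := by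
    intro z hz
    refine div_ne_zero (fun e => homit z hz ?_) (hden z hz)
    have : (starRingEnd ℂ) κ * (((t^2 : ℝ):ℂ) + κ * h z) = 0 := by rw [e, mul_zero]
    linear_combination this - hκp - h z * hκκ
  have hΦ1 : ∀ z ∈ ball (0:ℂ) 1, ‖Φ z‖ < 1 := fun z hz =>
    disk_aut (by rw [abs_of_pos t2]; exact t21) (hlt z hz)
  obtain ⟨l, hld, hl0, hl⟩ := exists_log hΦd hΦne (y := ((2 * Real.log t : ℝ):ℂ)) (by
    rw [← Complex.ofReal_exp, hΦ0, two_mul, Real.exp_add, Real.exp_log ht, sq])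
  set σ : ℂ → ℂ := fun z => Complex.exp (l z / 2) with hσ
  have hσ0 : σ 0 = t := by
    simp only [hσ, hl0]
    rw [show ((2 * Real.log t : ℝ):ℂ) / 2 = ((Real.log t : ℝ):ℂ) by push_cast; ring,
      ← Complex.ofReal_exp, Real.exp_log ht]
  have hσsq : ∀ z ∈ ball (0:ℂ) 1, σ z ^ 2 = Φ z := fun z hz => by
    rw [← hl z hz, sq]
    simp only [hσ]
    rw [← Complex.exp_add]; congr 1; ring
  have hσ1 : ∀ z ∈ ball (0:ℂ) 1, ‖σ z‖ < 1 := fun z hz => by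
    have := hΦ1 z hz
    rw [← hσsq z hz, norm_pow] at this
    nlinarith [norm_nonneg (σ z)]
  have hσd : DifferentiableOn ℂ σ (ball 0 1) := by
    simp only [hσ]; fun_prop
  set k : ℂ → ℂ := fun z => (((-t:ℝ):ℂ) + σ z) / (1 + ((-t:ℝ):ℂ) * σ z) with hk
  have hkden : ∀ z ∈ ball (0:ℂ) 1, 1 + ((-t:ℝ):ℂ) * σ z ≠ 0 := fun z hz => by
    apply one_add_ne
    rw [norm_mul, Complex.norm_real, Real.norm_eq_abs, abs_neg, abs_of_pos ht]
    nlinarith [hσ1 z hz, norm_nonneg (σ z)]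
  have hkd : DifferentiableOn ℂ k (ball 0 1) :=
    DifferentiableOn.div (by fun_prop) (by fun_prop) hkden
  have hk1 : ∀ z ∈ ball (0:ℂ) 1, ‖k z‖ < 1 := fun z hz =>
    disk_aut (by rw [abs_neg, abs_of_pos ht]; exact ht1) (hσ1 z hz)
  have hk0 : k 0 = 0 := by simp [hk, hσ0]
  have hk1t : ∀ z ∈ ball (0:ℂ) 1, 1 + (t:ℂ) * k z ≠ 0 := fun z hz => by
    apply one_add_ne
    rw [norm_mul, Complex.norm_real, Real.norm_of_nonneg ht.le]
    nlinarith [hk1 z hz, norm_nonneg (k z)]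
  have hk1b : ∀ z ∈ ball (0:ℂ) 1, 1 + (b:ℂ) * k z ≠ 0 := fun z hz => by
    apply one_add_ne
    rw [norm_mul, Complex.norm_real, Real.norm_of_nonneg hb0.le]
    nlinarith [hk1 z hz, norm_nonneg (k z)]
  have h4 : (1:ℂ) - (t:ℂ)^4 ≠ 0 := by
    have : (1:ℝ) - t^4 ≠ 0 := by nlinarith
    exact_mod_cast this
  have hbC : (b:ℂ) * (1 + (t:ℂ)^2) = 2 * t := by exact_mod_cast hb
  have hσk : ∀ z ∈ ball (0:ℂ) 1, ((t:ℂ) + k z) / (1 + t * k z) = σ z := fun z hz => by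
    rw [div_eq_iff (hk1t z hz)]
    have hd := hkden z hz
    have e : k z * (1 + ((-t:ℝ):ℂ) * σ z) = ((-t:ℝ):ℂ) + σ z := div_mul_cancel₀ _ hd
    push_cast at e
    linear_combination e
  have hBk : ∀ z ∈ ball (0:ℂ) 1, k z * (b + k z) / (1 + b * k z) = κ * h z := fun z hz => by
    refine osc_alg hbC (hk1t z hz) (hk1b z hz) (by simpa using hden z hz) h4 ?_
    rw [hσk z hz, hσsq z hz]; simp [hΦ]
  -- `b + k` vanishes nowhere, because a zero would be a zero of `h`, i.e. the origin
  have hbk : ∀ z ∈ ball (0:ℂ) 1, (b:ℂ) + k z ≠ 0 := by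
    intro z hz e
    have h1 := hBk z hz
    rw [e, mul_zero, zero_div] at h1
    have h2 : h z = 0 := by
      rcases mul_eq_zero.1 h1.symm with h | h
      · rw [h] at hκ; simp at hκ
      · exact h
    have h3 := H.inj hz (mem_ball_self one_pos) (h2.trans hh0.symm)
    rw [h3, hk0, add_zero] at e
    exact hb0.ne' (by exact_mod_cast e)
  have hqd : DifferentiableOn ℂ (fun z => b * (1 + (b:ℂ) * k z) / (b + k z)) (ball 0 1) :=
    DifferentiableOn.div (by fun_prop) (by fun_prop) hbk
  obtain ⟨m, hmd, hm0, hm⟩ := exists_log hqd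
    (fun z hz => div_ne_zero (mul_ne_zero (by exact_mod_cast hb0.ne') (hk1b z hz)) (hbk z hz))
    (y := 0) (by
      rw [hk0, Complex.exp_zero]
      have : (b:ℂ) ≠ 0 := by exact_mod_cast hb0.ne'
      simp [this])
  set h₁ : ℂ → ℂ := fun z => (starRingEnd ℂ) κ * k z with hh1
  have hκh1 : ∀ z, κ * h₁ z = k z := fun z => by
    simp only [hh1]; linear_combination k z * hκκ
  have hBh : ∀ z ∈ ball (0:ℂ) 1, blB ε κ (h₁ z) = h z := fun z hz => by
    unfold blB
    rw [hκh1, cexp_real_neg, ← hbdef]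
    have := hBk z hz
    rw [show h₁ z * (↑b + k z) / (1 + ↑b * k z) = (starRingEnd ℂ) κ * (k z * (↑b + k z) / (1 + ↑b * k z)) by
      simp only [hh1]; ring, this]
    linear_combination h z * hκκ
  have heq : ∀ z ∈ ball (0:ℂ) 1,
      hF (Real.exp ((N + 1 : ℕ) * ε) * A) (fun z => lam z + m z) z = h₁ z := fun z hz => by
    have e1 : Complex.exp (m z) * (b + k z) = b * (1 + b * k z) := by
      rw [hm z hz, div_mul_cancel₀ _ (hbk z hz)]
    have e2 : h z * (1 + b * k z) = h₁ z * (b + k z) := by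
      rw [← hBh z hz]; unfold blB
      rw [hκh1, cexp_real_neg, ← hbdef, div_mul_cancel₀ _ (hk1b z hz)]
    have e3 : (Real.exp ((N + 1 : ℕ) * ε) : ℂ) * b = Real.exp (N * ε) := by
      rw [hbdef, ← Complex.ofReal_mul, ← Real.exp_add]; congr 2; push_cast; ring
    have e4 : h z = ((Real.exp (N * ε) * A : ℝ) : ℂ) * z * Complex.exp (lam z) := rfl
    apply mul_right_cancel₀ (hbk z hz)
    rw [← e2, e4]
    unfold hF
    rw [Complex.exp_add]
    rw [Complex.ofReal_mul, Complex.ofReal_mul, ← e3]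
    linear_combination (Real.exp ((N + 1 : ℕ) * ε) : ℂ) * A * z * Complex.exp (lam z) * e1
  have hh1d : DifferentiableOn ℂ h₁ (ball 0 1) := by simp only [hh1]; fun_prop
  have hh1n : ∀ z, ‖h₁ z‖ = ‖k z‖ := fun z => by
    simp only [hh1]; rw [norm_mul, RCLike.norm_conj, hκ, one_mul]
  have hh10 : h₁ 0 = 0 := by simp [hh1, hk0]
  have hh1m : Set.MapsTo h₁ (ball 0 1) (ball 0 1) := fun z hz => by
    rw [mem_ball_zero_iff, hh1n]; exact hk1 z hz
  have hsch : ∀ z ∈ ball (0:ℂ) 1, ‖h₁ z‖ ≤ ‖z‖ := fun z hz =>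
    Complex.norm_le_norm_of_mapsTo_ball hh1d (fun x hx => ball_subset_closedBall (hh1m hx)) hh10
      (by simpa using hz)
  have hsub : ball (0:ℂ) b ⊆ ball 0 1 := ball_subset_ball hb1.le
  have hmapsb : Set.MapsTo h₁ (ball 0 b) (ball 0 b) := fun z hz => by
    rw [mem_ball_zero_iff] at *
    exact (hsch z (hsub (by simpa using hz))).trans_lt hz
  have hell : ∀ z ∈ ball (0:ℂ) b, blL ε κ (h₁ z) + m z = 0 := by
    intro z hz
    refine log_unique (F := fun z => blL ε κ (h₁ z) + m z) (r := b) ?_ ?_ ?_ hz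
    · exact ((blL_diff hε hκ).comp (hh1d.mono hsub) hmapsb).add (hmd.mono hsub)
    · simp [hh10, hm0, blL]
    · intro z hz
      have hz1 := hsub hz
      rw [Complex.exp_add, exp_blL hε hκ (by simpa using hmapsb hz), hm z hz1, hκh1, cexp_real_neg,
        ← hbdef]
      have e : Complex.exp (ε:ℂ) * b = 1 := by
        rw [hbdef, ← cexp_real_neg, ← Complex.exp_add, add_neg_cancel, Complex.exp_zero]
      have hB := hk1b z hz1
      have hB2 := hbk z hz1
      rw [div_mul_div_comm, div_eq_one_iff_eq (mul_ne_zero hB hB2)]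
      linear_combination (1 + b * k z) * k z * e
  refine ⟨_, fun z => lam z + m z, ⟨H.reach.step hκ, ?_, ?_, ?_, ?_, ?_⟩⟩
  · exact H.diff.add hmd
  · simp [H.zero, hm0]
  · intro x hx y hy e
    rw [heq x hx, heq y hy] at e
    refine H.inj hx hy ?_
    change h x = h y
    rw [← hBh x hx, ← hBh y hy, e]
  · intro x hx
    rw [heq x hx]; exact hh1m hx
  · intro z hz
    rw [heq z (hsub hz), hBh z (hsub hz), H.eqn z hz]
    linear_combination -hell z hz

/-! ### Termination of the osculation process -/

/-- If the univalent function `h` takes every value of modulus `ρ`, then `h'(0) ≥ ρ`: on some circle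
`|h| ≥ ρ`, and the minimum principle applied to `h(z) / z = a e^{lam}` gives `a ≥ ρ`. -/
lemma radius_le_of_surj {a ρ : ℝ} (ha : 0 < a) (hρ : 0 < ρ) {lam : ℂ → ℂ}
    (hd : DifferentiableOn ℂ lam (ball 0 1)) (h0 : lam 0 = 0)
    (hinj : Set.InjOn (hF a lam) (ball 0 1))
    (hs : ∀ p : ℂ, ‖p‖ = ρ → ∃ z ∈ ball (0:ℂ) 1, hF a lam z = p) : ρ ≤ a := by
  set h := hF a lam with hh
  have hhd : DifferentiableOn ℂ h (ball 0 1) := hF_diff hd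
  have hh0 : h 0 = 0 := by simp [hh, hF]
  have han : AnalyticOnNhd ℂ h (ball 0 1) := hhd.analyticOnNhd isOpen_ball
  -- the preimage of the circle of radius `ρ` is a compact subset of the disk
  have hemb : Topology.IsInducing (fun x : ball (0:ℂ) 1 => h x) := by
    refine (Topology.IsOpenEmbedding.of_continuous_injective_isOpenMap
      (continuousOn_iff_continuous_domRestrict.1 hhd.continuousOn)
      (Set.injOn_iff_injective.1 hinj) ?_).isInducing
    rcases han.is_constant_or_isOpen (convex_ball (0:ℂ) 1).isPreconnected with ⟨w, hw⟩ | ho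
    · exfalso
      obtain ⟨z, hz, e⟩ := hs (ρ:ℂ) (by simp [abs_of_pos hρ])
      have e0 := hw 0 (mem_ball_self one_pos)
      rw [hw z hz, ← e0, hh0] at e
      exact hρ.ne (by exact_mod_cast e)
    · intro s hs
      have := ho (Subtype.val '' s) (by rintro _ ⟨x, _, rfl⟩; exact x.2)
        (isOpen_ball.isOpenMap_subtype_val s hs)
      rw [Set.image_image] at this
      exact this
  have hcpt := hemb.isCompact_preimage' (isCompact_sphere (0:ℂ) ρ) (by
    intro p hp
    obtain ⟨z, hz, e⟩ := hs p (by simpa using hp)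
    exact ⟨⟨z, hz⟩, e⟩)
  have hcpt2 := (hcpt.image continuous_subtype_val)
  obtain ⟨z0, hz0, e0⟩ := hs (ρ:ℂ) (by simp [abs_of_pos hρ])
  have hne : (Subtype.val '' ((fun x : ball (0:ℂ) 1 => h x) ⁻¹' sphere 0 ρ)).Nonempty :=
    ⟨z0, ⟨z0, hz0⟩, by simp [e0, abs_of_pos hρ], rfl⟩
  obtain ⟨zm, hzm, hmax⟩ := hcpt2.exists_isMaxOn hne continuous_norm.continuousOn
  have hzm1 : ‖zm‖ < 1 := by
    obtain ⟨x, _, rfl⟩ := hzm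
    exact mem_ball_zero_iff.1 x.2
  have hbd : ∀ z ∈ ball (0:ℂ) 1, ‖h z‖ = ρ → ‖z‖ ≤ ‖zm‖ := fun z hz e =>
    hmax (a := z) ⟨⟨z, hz⟩, by simpa using e, rfl⟩
  obtain ⟨r, hr1, hr2⟩ := exists_between hzm1
  have hr0 : 0 < r := (norm_nonneg _).trans_lt hr1
  have hsub : closedBall (0:ℂ) r ⊆ ball 0 1 := closedBall_subset_ball hr2
  have hcl : closure (ball (0:ℂ) r) = closedBall 0 r := closure_ball 0 hr0.ne'
  have hfr : frontier (ball (0:ℂ) r) = sphere 0 r := frontier_ball 0 hr0.ne'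
  have hneρ : ∀ z ∈ sphere (0:ℂ) r, ‖h z‖ ≠ ρ := fun z hz e => by
    have := hbd z (hsub (sphere_subset_closedBall hz)) e
    rw [mem_sphere_zero_iff_norm] at hz
    linarith
  have hpre : IsPreconnected (sphere (0:ℂ) r) :=
    isPreconnected_sphere (by rw [Complex.rank_real_complex]; norm_num) 0 r
  have hcont : ContinuousOn (fun z => ‖h z‖) (sphere (0:ℂ) r) :=
    (hhd.continuousOn.mono (sphere_subset_closedBall.trans hsub)).norm
  have hdc : DiffContOnCl ℂ h (ball 0 r) := by
    refine DifferentiableOn.diffContOnCl ?_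
    rw [hcl]; exact hhd.mono hsub
  -- `|h|` exceeds `ρ` somewhere on the circle by the maximum principle, hence everywhere
  have hex : ∃ z ∈ sphere (0:ℂ) r, ρ < ‖h z‖ := by
    by_contra hcon
    push Not at hcon
    have hlt : ∀ z ∈ sphere (0:ℂ) r, ‖h z‖ < ρ := fun z hz => lt_of_le_of_ne (hcon z hz) (hneρ z hz)
    obtain ⟨zx, hzx, hzmax⟩ := (isCompact_sphere (0:ℂ) r).exists_isMaxOn
      (NormedSpace.sphere_nonempty.2 hr0.le) hcont
    have hz0r : z0 ∈ closure (ball (0:ℂ) r) := by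
      rw [hcl, mem_closedBall_zero_iff]
      exact (hbd z0 hz0 (by simp [e0, abs_of_pos hρ])).trans hr1.le
    have := Complex.norm_le_of_forall_mem_frontier_norm_le isBounded_ball hdc (C := ‖h zx‖)
      (by rw [hfr]; exact fun z hz => hzmax hz) hz0r
    rw [e0, Complex.norm_real, Real.norm_of_nonneg hρ.le] at this
    exact absurd (hlt zx hzx) (not_lt.2 this)
  obtain ⟨w, hw, hwρ⟩ := hex
  have hall : ∀ z ∈ sphere (0:ℂ) r, ρ < ‖h z‖ := by
    intro z hz
    by_contra hcon
    obtain ⟨y, hy, e⟩ := hpre.intermediate_value hz hw hcont ⟨not_lt.1 hcon, hwρ.le⟩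
    exact hneρ y hy e
  have hE : DiffContOnCl ℂ (fun z => Complex.exp (-lam z)) (ball 0 r) := by
    refine DifferentiableOn.diffContOnCl ?_
    rw [hcl]
    have := hd.mono hsub
    fun_prop
  have := Complex.norm_le_of_forall_mem_frontier_norm_le isBounded_ball hE (C := a / ρ)
    (z := 0) ?_ (subset_closure (mem_ball_self hr0))
  · simp only [h0, neg_zero, Complex.exp_zero, norm_one] at this
    rwa [le_div_iff₀ hρ, one_mul] at this
  · rw [hfr]
    intro z hz
    have h1 := hall z hz
    have h2 : ‖h z‖ = a * ‖z‖ * ‖Complex.exp (lam z)‖ := by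
      simp only [hh, hF]; rw [norm_mul, norm_mul, Complex.norm_real, Real.norm_of_nonneg ha.le]
    have hzr : ‖z‖ = r := by simpa using hz
    rw [h2, hzr] at h1
    have hpos : 0 < ‖Complex.exp (lam z)‖ := norm_pos_iff.2 (Complex.exp_ne_zero _)
    rw [Complex.exp_neg, norm_inv, inv_eq_one_div, div_le_div_iff₀ hpos hρ]
    have : a * r * ‖Complex.exp (lam z)‖ ≤ a * 1 * ‖Complex.exp (lam z)‖ := by gcongr
    linarith

/-- The Schwarz lemma bounds the derivative at `0` by one. -/
lemma osc_radius_le {ε A : ℝ} {g : ℂ → ℂ} {N : ℕ} {L lam : ℂ → ℂ}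
    (H : Osc ε A g N L lam) : Real.exp (N * ε) * A ≤ 1 := by
  have h1 := Complex.norm_deriv_le_one_of_mapsTo_ball (hF_diff (a := Real.exp (N * ε) * A) H.diff)
    (by
      intro z hz
      have : hF (Real.exp (N * ε) * A) lam 0 = 0 := by simp [hF]
      rw [this]
      exact ball_subset_closedBall (H.maps hz)) one_pos
  rw [hF_deriv_zero H.diff H.zero, Complex.norm_real] at h1
  exact (le_abs_self _).trans h1

/-- The derivative at `0` grows by the factor `e^ε` in each step and is at most one, so the process
ends, and it can only end once the derivative has reached `t²`. -/
lemma osc_exists {t ε A : ℝ} (ht : 0 < t) (ht1 : t < 1) (hε : 0 < ε)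
    (hb : Real.exp (-ε) * (1 + t ^ 2) = 2 * t)
    (hA : 0 < A) {g lam0 : ℂ → ℂ} (H0 : Osc ε A g 0 (fun _ => 0) lam0) :
    ∃ N L lam, Osc ε A g N L lam ∧ t ^ 2 ≤ Real.exp (N * ε) * A := by
  by_contra hcon
  push Not at hcon
  have hall : ∀ N : ℕ, ∃ L lam, Osc ε A g N L lam := by
    intro N
    induction N with
    | zero => exact ⟨_, _, H0⟩
    | succ N ih =>
      obtain ⟨L, lam, H⟩ := ih
      have : ∃ p : ℂ, ‖p‖ = t ^ 2 ∧ ∀ z ∈ ball (0:ℂ) 1, hF (Real.exp (N * ε) * A) lam z ≠ p := by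
        by_contra hc
        push Not at hc
        exact absurd (radius_le_of_surj (by positivity) (by positivity) H.diff H.zero H.inj hc)
          (not_le.2 (hcon N L lam H))
      obtain ⟨p, hp, hom⟩ := this
      exact osc_step ht ht1 hb H hp hom
  obtain ⟨N, hN⟩ := exists_nat_gt (1 / (A * ε))
  obtain ⟨L, lam, H⟩ := hall N
  have h1 := osc_radius_le H
  have h2 := Real.add_one_le_exp ((N:ℝ) * ε)
  rw [div_lt_iff₀ (by positivity)] at hN
  nlinarith

/-! ### Closeness of the accumulated coefficients -/

lemma lip_of_bound {L : ℂ → ℂ} {R R2 B : ℝ} (hRR : R < R2)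
    (hL : DifferentiableOn ℂ L (ball 0 R2)) (hB : ∀ z ∈ ball (0:ℂ) R2, ‖L z‖ ≤ B)
    {x y : ℂ} (hx : x ∈ ball (0:ℂ) R) (hy : y ∈ ball (0:ℂ) R) :
    ‖L y - L x‖ ≤ B / ((R2 - R) / 2) * ‖y - x‖ := by
  refine Convex.norm_image_sub_le_of_norm_deriv_le (s := ball (0:ℂ) R) (fun z hz => ?_)
    (fun z hz => ?_) (convex_ball _ _) hx hy
  · exact hL.differentiableAt (isOpen_ball.mem_nhds (ball_subset_ball hRR.le hz))
  · have hsub : closedBall z ((R2 - R) / 2) ⊆ ball 0 R2 := by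
      intro w hw
      rw [mem_ball_zero_iff] at *
      rw [mem_closedBall, dist_eq_norm] at hw
      have := norm_le_norm_add_norm_sub' w z
      linarith
    refine Complex.norm_deriv_le_of_forall_mem_sphere_norm_le (by linarith) ?_
      (fun w hw => hB w (hsub (sphere_subset_closedBall hw)))
    exact DifferentiableOn.diffContOnCl (hL.mono (closure_ball_subset_closedBall.trans hsub))

/-- When the process ends, `h'(0)` lies between `t²` and `1`; Borel–Carathéodory applied to `lam` shows
that `h` is close to the identity, so `L` is close to `g = L ∘ h + lam`. -/
lemma osc_close {R1 R R' Λ : ℝ} (hR1 : 0 < R1) (hR1R : R1 < R) (hRR : R < R') (hR' : R' < 1)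
    (hΛ : 0 < Λ) : ∃ K > 0, ∃ μ0 > 0, ∀ t ε : ℝ, ∀ g : ℂ → ℂ, ∀ N : ℕ, ∀ L lam : ℂ → ℂ,
      0 < t → t < 1 → 0 < ε → R' ≤ Real.exp (-ε) → DifferentiableOn ℂ g (ball 0 1) →
      Osc ε (Real.exp (-Λ)) g N L lam → t ^ 2 ≤ Real.exp (N * ε) * Real.exp (-Λ) →
      -2 * Real.log t ≤ μ0 →
      ∀ k, ‖co L k - co g k‖ ≤ K * (-2 * Real.log t) / R1 ^ k := by
  have hR : 0 < R := hR1.trans hR1R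
  have hR1' : R < 1 := hRR.trans hR'
  set R2 := (R + R') / 2 with hR2
  set B := 2 * Λ * R2 / (R' - R2) with hB
  have hBpos : 0 < B := by
    have : 0 < R' - R2 := by linarith
    have : 0 < R2 := by linarith
    positivity
  set K1 := 2 * R / (1 - R) with hK1
  have hK1pos : 0 < K1 := by
    have : 0 < 1 - R := by linarith
    positivity
  set D := B / ((R2 - R) / 2) with hD
  have hDpos : 0 < D := by
    have : 0 < R2 - R := by linarith
    positivity
  refine ⟨D * (2 * (K1 + 1)) + K1, by positivity, 1 / (K1 + 1), by positivity, ?_⟩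
  intro t ε g N L lam ht ht1 hε hRε hg H hta hμ k
  set μ := -2 * Real.log t with hμdef
  have hμ0 : 0 < μ := by have := Real.log_neg ht ht1; linarith
  set a := Real.exp (N * ε) * Real.exp (-Λ) with ha
  have ha0 : 0 < a := by positivity
  have ha1 : a ≤ 1 := osc_radius_le H
  have hloga : Real.log a ≤ 0 := Real.log_nonpos ha0.le ha1
  have hloga2 : -μ ≤ Real.log a := by
    have := Real.log_le_log (by positivity) hta
    rw [Real.log_pow] at this; push_cast at this; linarith
  have hNΛ : N * ε ≤ Λ := by
    have : N * ε + -Λ ≤ 0 := by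
      rw [ha, ← Real.exp_add] at ha1
      exact Real.exp_le_one_iff.1 ha1
    linarith
  have hsch : ∀ z ∈ ball (0:ℂ) 1, ‖hF a lam z‖ ≤ ‖z‖ := fun z hz =>
    Complex.norm_le_norm_of_mapsTo_ball (hF_diff H.diff)
      (fun x hx => ball_subset_closedBall (H.maps hx)) (by simp [hF]) (by simpa using hz)
  have hre : ∀ z ∈ ball (0:ℂ) 1, (lam z).re ≤ μ := by
    intro z hz
    rcases eq_or_ne z 0 with rfl | hz0
    · rw [H.zero]; simpa using hμ0.le
    · have h1 := hsch z hz
      unfold hF at h1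
      rw [norm_mul, norm_mul, Complex.norm_real, Real.norm_of_nonneg ha0.le, Complex.norm_exp] at h1
      have hzp : 0 < ‖z‖ := norm_pos_iff.2 hz0
      have h2 : a * Real.exp (lam z).re ≤ 1 := by
        by_contra hc
        nlinarith
      have h3 := Real.log_nonpos (by positivity) h2
      rw [Real.log_mul ha0.ne' (Real.exp_pos _).ne', Real.log_exp] at h3
      linarith
  have hlam : ∀ z ∈ ball (0:ℂ) R, ‖lam z‖ ≤ K1 * μ := by
    intro z hz
    have hz1 : z ∈ ball (0:ℂ) 1 := ball_subset_ball hR1'.le hz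
    rw [mem_ball_zero_iff] at hz
    have h1 := Complex.borelCaratheodory_zero hμ0 H.diff (fun z hz => hre z hz) one_pos hz1 H.zero
    refine h1.trans ?_
    rw [hK1, div_mul_eq_mul_div]
    apply div_le_div₀ (by positivity) _ (by linarith) (by linarith)
    nlinarith
  have hdist : ∀ z ∈ ball (0:ℂ) R, ‖hF a lam z - z‖ ≤ 2 * (K1 + 1) * μ := by
    intro z hz
    have hl := hlam z hz
    have e : hF a lam z - z = z * (Complex.exp (Real.log a + lam z) - 1) := by
      unfold hF
      rw [Complex.exp_add, ← Complex.ofReal_exp, Real.exp_log ha0]; ring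
    have h1 : ‖(Real.log a : ℂ) + lam z‖ ≤ (K1 + 1) * μ := by
      refine (norm_add_le _ _).trans ?_
      rw [Complex.norm_real, Real.norm_eq_abs, abs_of_nonpos hloga]
      linarith
    have h2 : (K1 + 1) * μ ≤ 1 := by
      rw [le_div_iff₀ (by positivity)] at hμ; linarith
    have h3 := Complex.norm_exp_sub_one_le (h1.trans h2)
    rw [e, norm_mul]
    rw [mem_ball_zero_iff] at hz
    have : ‖z‖ ≤ 1 := by linarith
    calc _ ≤ 1 * (2 * ‖(Real.log a : ℂ) + lam z‖) := by gcongr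
      _ ≤ _ := by linarith
  obtain ⟨hLd, hLb⟩ := H.reach.bound hε (by linarith : 0 < R2) (by linarith : R2 < R') hRε hΛ hNΛ
  have hLR : DifferentiableOn ℂ L (ball 0 R) := hLd.mono (ball_subset_ball (by linarith))
  have hgR : DifferentiableOn ℂ g (ball 0 R) := hg.mono (ball_subset_ball (by linarith))
  have hmain : ∀ z ∈ ball (0:ℂ) R, ‖L z - g z‖ ≤ (D * (2 * (K1 + 1)) + K1) * μ := by
    intro z hz
    have hz1 : z ∈ ball (0:ℂ) 1 := ball_subset_ball hR1'.le hz
    have hhz : hF a lam z ∈ ball (0:ℂ) R := by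
      rw [mem_ball_zero_iff] at hz ⊢
      exact (hsch z hz1).trans_lt hz
    rw [H.eqn z (ball_subset_ball (by linarith) hz)]
    have h1 := lip_of_bound (by linarith : R < R2) hLd hLb hhz hz
    have h2 := hdist z hz
    have h3 := hlam z hz
    rw [norm_sub_rev z] at h1
    calc ‖L z - (L (hF a lam z) + lam z)‖ = ‖(L z - L (hF a lam z)) - lam z‖ := by congr 1; ring
      _ ≤ ‖L z - L (hF a lam z)‖ + ‖lam z‖ := norm_sub_le _ _
      _ ≤ D * ‖hF a lam z - z‖ + K1 * μ := add_le_add h1 h3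
      _ ≤ D * (2 * (K1 + 1) * μ) + K1 * μ := by gcongr
      _ = _ := by ring
  rw [← co_sub hR hLR hgR]
  exact co_bound hR1 hR1R (hLR.sub hgR) (fun z hz => hmain z (by
    rw [mem_sphere_zero_iff_norm] at hz; rw [mem_ball_zero_iff]; linarith)) k

lemma co_dilate {g : ℂ → ℂ} (hg : DifferentiableOn ℂ g (ball 0 1)) {r : ℝ} (hr : 0 < r) (hr1 : r < 1)
    (k : ℕ) : co (fun z => g (r * z)) k = (r:ℂ) ^ k * co g k := by
  refine co_unique (R := 1) (a := fun k => (r:ℂ) ^ k * co g k) one_pos (fun z hz => ?_) k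
  have hrz : (r:ℂ) * z ∈ ball (0:ℂ) 1 := by
    rw [mem_ball_zero_iff] at *
    rw [norm_mul, Complex.norm_real, Real.norm_of_nonneg hr.le]
    nlinarith [norm_nonneg z]
  have e : (fun k => (r:ℂ) ^ k * co g k * z ^ k) = fun k => co g k * ((r:ℂ) * z) ^ k := by
    funext k; ring
  rw [e]
  exact co_hasSum hg hrz

/-! ### The strict inequality for the energy -/

lemma exists_dilation (c : ℕ → ℂ) (n : ℕ) {δ : ℝ} (hδ : 0 < δ) :
    ∃ r : ℝ, 0 < r ∧ r < 1 ∧ ∀ k < n, ‖(r:ℂ) ^ (k + 1) * c (k + 1) - c (k + 1)‖ ≤ δ := by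
  have h1 : ∀ k ∈ Finset.range n, ∀ᶠ r : ℝ in 𝓝[<] 1,
      ‖(r:ℂ) ^ (k + 1) * c (k + 1) - c (k + 1)‖ ≤ δ := by
    intro k _
    have : Filter.Tendsto (fun r : ℝ => ‖(r:ℂ) ^ (k + 1) * c (k + 1) - c (k + 1)‖) (𝓝[<] 1) (𝓝 0) := by
      have hc : Continuous (fun r : ℝ => ‖(r:ℂ) ^ (k + 1) * c (k + 1) - c (k + 1)‖) := by fun_prop
      have := (hc.tendsto 1).mono_left (nhdsWithin_le_nhds (s := Set.Iio (1:ℝ)))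
      simpa using this
    exact this.eventually (Iic_mem_nhds hδ)
  have h2 := (Filter.eventually_all_finset (Finset.range n)).2 h1
  have h3 : ∀ᶠ r : ℝ in 𝓝[<] 1, r ∈ Set.Ioo (0:ℝ) 1 := Ioo_mem_nhdsLT one_pos
  obtain ⟨r, hr, hr3⟩ := (h2.and h3).exists
  exact ⟨r, hr3.1, hr3.2, fun k hk => hr k (Finset.mem_range.2 hk)⟩

/-- Existence of arbitrarily small step sizes `ε` together with the matching `t`. -/
lemma exists_scale {ε0 μ0 e1 : ℝ} (h1 : 0 < ε0) (h2 : 0 < μ0) (he : e1 < 1) :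
    ∃ t ε : ℝ, 0 < t ∧ t < 1 ∧ 0 < ε ∧ Real.exp (-ε) * (1 + t ^ 2) = 2 * t ∧ ε ≤ ε0 ∧
      -2 * Real.log t ≤ μ0 ∧ e1 ≤ Real.exp (-ε) := by
  have c1 : Filter.Tendsto (fun t : ℝ => Real.log ((1 + t ^ 2) / (2 * t))) (𝓝[<] 1) (𝓝 0) := by
    have hc : ContinuousAt (fun t : ℝ => Real.log ((1 + t ^ 2) / (2 * t))) 1 := by
      refine ContinuousAt.log (ContinuousAt.div (by fun_prop) (by fun_prop) (by norm_num)) (by norm_num)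
    have := hc.tendsto.mono_left (nhdsWithin_le_nhds (s := Set.Iio (1:ℝ)))
    norm_num at this
    exact this
  have c2 : Filter.Tendsto (fun t : ℝ => -2 * Real.log t) (𝓝[<] 1) (𝓝 0) := by
    have hc : ContinuousAt (fun t : ℝ => -2 * Real.log t) 1 :=
      continuousAt_const.mul (Real.continuousAt_log one_ne_zero)
    have := hc.tendsto.mono_left (nhdsWithin_le_nhds (s := Set.Iio (1:ℝ)))
    simpa using this
  have c3 : Filter.Tendsto (fun t : ℝ => Real.exp (-Real.log ((1 + t ^ 2) / (2 * t))))
      (𝓝[<] 1) (𝓝 1) := by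
    have := (Real.continuous_exp.tendsto _).comp c1.neg
    rw [neg_zero, Real.exp_zero] at this
    exact this
  have h3 : ∀ᶠ r : ℝ in 𝓝[<] 1, r ∈ Set.Ioo (0:ℝ) 1 := Ioo_mem_nhdsLT one_pos
  obtain ⟨t, ⟨⟨ht1, ht2⟩, ht3⟩, ht4⟩ := (((c1.eventually (Iic_mem_nhds h1)).and
    (c2.eventually (Iic_mem_nhds h2))).and (c3.eventually (Ici_mem_nhds he))).and h3 |>.exists
  obtain ⟨ht0, htl⟩ := ht4
  have hpos : 0 < (1 + t ^ 2) / (2 * t) := by positivity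
  refine ⟨t, Real.log ((1 + t ^ 2) / (2 * t)), ht0, htl, ?_, ?_, ht1, ht2, ht3⟩
  · apply Real.log_pos
    rw [lt_div_iff₀ (by positivity)]
    nlinarith [sq_pos_of_pos (sub_pos.2 htl)]
  · rw [Real.exp_neg, Real.exp_log hpos]
    field_simp

/-- Initial state of the process: a dilation of `f` is bounded, so a small multiple maps the disk
into itself. -/
lemma osc_start {f g : ℂ → ℂ} (hf : InClassS f) (hg : DifferentiableOn ℂ g (ball 0 1)) (hg0 : g 0 = 0)
    (hfg : ∀ z ∈ ball (0:ℂ) 1, z ≠ 0 → Complex.exp (g z) = f z / z) {r : ℝ} (hr : 0 < r) (hr1 : r < 1)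
    (τ : ℝ) (hτ : 0 ≤ τ) :
    ∃ Λ : ℝ, τ + 1 ≤ Λ ∧ ∀ ε, Osc ε (Real.exp (-Λ)) (fun z => g (r * z)) 0 (fun _ => 0)
      (fun z => g (r * z)) := by
  obtain ⟨hfa, hfi, hf0, -⟩ := hf
  have hsub : closedBall (0:ℂ) r ⊆ ball 0 1 := closedBall_subset_ball hr1
  obtain ⟨C, hC⟩ := (isCompact_closedBall (0:ℂ) r).exists_bound_of_continuousOn
    (hfa.continuousOn.mono hsub)
  have hC0 : 0 ≤ C := (norm_nonneg _).trans (hC 0 (mem_closedBall_self hr.le))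
  refine ⟨τ + 1 + C / r, by have : 0 ≤ C / r := by positivity
                            linarith, fun ε => ?_⟩
  set Λ := τ + 1 + C / r with hΛ
  have hexp : C / r < Real.exp Λ := by
    have := Real.add_one_le_exp Λ
    linarith
  have hmem : ∀ z ∈ ball (0:ℂ) 1, (r:ℂ) * z ∈ closedBall (0:ℂ) r := by
    intro z hz
    rw [mem_ball_zero_iff] at hz
    rw [mem_closedBall_zero_iff, norm_mul, Complex.norm_real, Real.norm_of_nonneg hr.le]
    nlinarith
  have hfeq : ∀ z ∈ ball (0:ℂ) 1, f z = z * Complex.exp (g z) := by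
    intro z hz
    rcases eq_or_ne z 0 with rfl | h
    · simp [hf0]
    · rw [hfg z hz h]; field_simp
  have key : ∀ z ∈ ball (0:ℂ) 1, hF (Real.exp ((0:ℕ) * ε) * Real.exp (-Λ)) (fun z => g (r * z)) z
      = (Real.exp (-Λ) / r : ℝ) * f (r * z) := by
    intro z hz
    rw [hfeq _ (hsub (hmem z hz))]
    unfold hF
    have : (r:ℂ) ≠ 0 := by exact_mod_cast hr.ne'
    simp only [CharP.cast_eq_zero, zero_mul, Real.exp_zero, one_mul]
    push_cast
    field_simp
  have hcr : ((Real.exp (-Λ) / r : ℝ) : ℂ) ≠ 0 := by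
    have : Real.exp (-Λ) / r ≠ 0 := by positivity
    exact_mod_cast this
  have hrC : (r:ℂ) ≠ 0 := by exact_mod_cast hr.ne'
  refine ⟨Reach.zero, ?_, by simp [hg0], ?_, ?_, fun z _ => by simp⟩
  · exact hg.comp (by fun_prop) (fun z hz => hsub (hmem z hz))
  · intro x hx y hy e
    rw [key x hx, key y hy] at e
    have := hfi (hsub (hmem x hx)) (hsub (hmem y hy)) (mul_left_cancel₀ hcr e)
    exact mul_left_cancel₀ hrC this
  · intro z hz
    rw [key z hz, mem_ball_zero_iff, norm_mul, Complex.norm_real, Real.norm_of_nonneg (by positivity)]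
    have h1 := hC _ (hmem z hz)
    calc Real.exp (-Λ) / r * ‖f (r * z)‖ ≤ Real.exp (-Λ) / r * C := by gcongr
      _ = Real.exp (-Λ) * (C / r) := by ring
      _ < Real.exp (-Λ) * Real.exp Λ := by gcongr
      _ = 1 := by rw [← Real.exp_add]; simp

/-- If the velocity is bounded below near the coefficients of `g`, then `co g` is a coefficientwise
limit of sequences whose energy at `x0` is at most `-d + o(1)`, with a fixed `d > 0`. -/
lemma strict_approx {f g : ℂ → ℂ} (hf : InClassS f) (hg : DifferentiableOn ℂ g (ball 0 1))
    (hg0 : g 0 = 0) (hfg : ∀ z ∈ ball (0:ℂ) 1, z ≠ 0 → Complex.exp (g z) = f z / z)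
    {x0 θ η C0 : ℝ} {m : ℕ} (hx0 : 0 < x0) (hx1 : x0 < 1) (hθ0 : 0 < θ) (hθ : θ ≤ 1) (hη : 0 < η)
    (hC0 : 0 ≤ C0)
    (hdef : ∀ κ : ℂ, ‖κ‖ = 1 → ∀ c : ℕ → ℂ, (∀ k < m, ‖c (k+1) - co g (k+1)‖ ≤ θ) →
      η ≤ ∑ k ∈ Finset.range m, ‖vSeq κ c k‖^2)
    (hC : ∀ κ : ℂ, ‖κ‖ = 1 → ∀ c : ℕ → ℂ, (∀ k < m, ‖c (k+1) - co g (k+1)‖ ≤ 2) →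
      ∀ k < m, ‖vSeq κ c k‖ ≤ C0) :
    ∃ d > 0, ∀ δ > 0, ∀ p : ℕ, ∃ c : ℕ → ℂ,
      Summable (fun k : ℕ => ((k:ℝ)+1)*‖c (k+1)‖^2*x0^(k+1)) ∧ EE c x0 ≤ -d + δ ∧
      ∀ k < p, ‖c (k+1) - co g (k+1)‖ ≤ δ := by
  obtain ⟨R1, hR1a, hR1b⟩ := exists_between (show Real.sqrt x0 < 1 by
    rw [Real.sqrt_lt' one_pos]; simpa using hx1)
  obtain ⟨R, hRa, hRb⟩ := exists_between hR1b
  obtain ⟨R', hR'a, hR'b⟩ := exists_between hRb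
  have hR1 : 0 < R1 := (Real.sqrt_nonneg _).trans_lt hR1a
  have hx0R : x0 < R1 ^ 2 := (Real.sqrt_lt' hR1).1 hR1a
  set β := (1 - x0) / 2 * (x0 / 2) ^ m * η with hβ
  have hβ0 : 0 < β := by
    have : 0 < 1 - x0 := by linarith
    positivity
  set τ := min (θ / (2 * (C0 + 1))) (x0 / 2) with hτ
  have hτ0 : 0 < τ := lt_min (by positivity) (by positivity)
  refine ⟨τ * β, by positivity, fun δ hδ p => ?_⟩
  set δ' := min δ (θ / 2) with hδ'
  have hδ0 : 0 < δ' := lt_min hδ (by positivity)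
  obtain ⟨r, hr, hr1, hrk⟩ := exists_dilation (co g) (max p m) (half_pos hδ0)
  obtain ⟨Λ, hΛτ, hosc⟩ := osc_start hf hg hg0 hfg hr hr1 τ hτ0.le
  have hΛ : 0 < Λ := by linarith
  obtain ⟨K', hK', ε0, hε0, hchain⟩ := chain (xs := x0 / 2) hR1 hRa hR'a hR'b (by linarith) (by linarith) hx0R
    hΛ hθ hη hC0 hdef hC
  obtain ⟨K, hK, μ0, hμ0, hclose⟩ := osc_close hR1 hRa hR'a hR'b hΛ
  obtain ⟨t, ε, ht, ht1, hε, hb, hε1, hμ1, hRε⟩ := exists_scale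
    (ε0 := min ε0 (δ / (Λ * K' + β)))
    (μ0 := min (min μ0 1) (δ' / 2 * R1 ^ (max p m) / K)) (e1 := R')
    (lt_min hε0 (by positivity)) (lt_min (lt_min hμ0 one_pos) (by positivity)) hR'b
  obtain ⟨hε1, hε2⟩ := le_min_iff.1 hε1
  obtain ⟨hμ12, hμ3⟩ := le_min_iff.1 hμ1
  obtain ⟨hμ1, hμ2⟩ := le_min_iff.1 hμ12
  have hμpos : 0 ≤ -2 * Real.log t := by have := Real.log_neg ht ht1; linarith
  obtain ⟨N, L, lam, H, hta⟩ := osc_exists ht ht1 hε hb (Real.exp_pos _) (hosc ε)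
  have hgr : DifferentiableOn ℂ (fun z => g (r * z)) (ball 0 1) := (hosc ε).diff
  have hcl := hclose t ε _ N L lam ht ht1 hε hRε hgr H hta hμ1
  have hNΛ : N * ε ≤ Λ := by
    have h1 := osc_radius_le H
    rw [← Real.exp_add] at h1
    have := Real.exp_le_one_iff.1 h1
    linarith
  have hNτ : τ ≤ N * ε := by
    have h1 := Real.log_le_log (by positivity) hta
    rw [Real.log_pow, ← Real.exp_add, Real.log_exp] at h1
    push_cast at h1
    linarith
  have hnear : ∀ k < max p m, ‖co L (k+1) - co g (k+1)‖ ≤ δ' := by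
    intro k hk
    have h1 := hcl (k+1)
    rw [co_dilate hg hr hr1] at h1
    have h2 := hrk k hk
    have h3 : K * (-2 * Real.log t) / R1 ^ (k+1) ≤ δ' / 2 := by
      rw [div_le_iff₀ (by positivity)]
      rw [le_div_iff₀ hK] at hμ3
      have : R1 ^ (max p m) ≤ R1 ^ (k+1) := pow_le_pow_of_le_one hR1.le hR1b.le hk
      have : δ' / 2 * R1 ^ (max p m) ≤ δ' / 2 * R1 ^ (k+1) := by gcongr
      linarith
    have h4 := norm_sub_le_norm_sub_add_norm_sub (co L (k+1)) ((r:ℂ)^(k+1) * co g (k+1)) (co g (k+1))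
    linarith
  set i := ⌊τ / ε⌋₊ with hi
  have hiτ : i * ε ≤ τ := by
    have := Nat.floor_le (show 0 ≤ τ / ε by positivity)
    rwa [le_div_iff₀ hε] at this
  have hiτ2 : τ - ε ≤ i * ε := by
    have := (Nat.lt_floor_add_one (τ / ε)).le
    rw [div_le_iff₀ hε] at this
    linarith
  have hiN : i ≤ N := by
    have : (i:ℝ) ≤ N := le_of_mul_le_mul_right (hiτ.trans hNτ) hε
    exact_mod_cast this
  obtain ⟨-, hch⟩ := hchain ε hε hε1 N L H.reach hNΛ
  have hEE := hch i hiN x0 (by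
    have := min_le_right (θ / (2 * (C0 + 1))) (x0 / 2)
    linarith) le_rfl (fun k hk => by
      have h1 := hnear k (lt_max_of_lt_right hk)
      have h2 : δ' ≤ θ / 2 := min_le_right _ _
      have h3 : τ ≤ θ / (2 * (C0 + 1)) := min_le_left _ _
      have h4 : i * ε * (C0 + 1) ≤ θ / 2 := by
        have := mul_le_mul_of_nonneg_right (hiτ.trans h3) (by linarith : 0 ≤ C0 + 1)
        have e : θ / (2 * (C0 + 1)) * (C0 + 1) = θ / 2 := by field_simp
        linarith
      linarith)
  refine ⟨co L, ?_, ?_, fun k hk => (hnear k (lt_max_of_lt_left hk)).trans (min_le_left _ _)⟩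
  · obtain ⟨hLd, hLb⟩ := H.reach.bound hε (by linarith : 0 < R) hR'a hRε hΛ hNΛ
    have hA0 : 0 ≤ 2 * Λ * R / (R' - R) := by
      have : 0 < R' - R := by linarith
      have : 0 < R := by linarith
      positivity
    refine summable_DD hA0 hR1 hx0.le hx0R (fun k => ?_)
    exact co_bound hR1 hRa hLd (fun z hz => hLb z (by
      rw [mem_sphere_zero_iff_norm] at hz; rw [mem_ball_zero_iff]; linarith)) (k+1)
  · rw [← hβ] at hEE
    have h1 : N * (K' * ε ^ 2) ≤ Λ * K' * ε := by
      have := mul_le_mul_of_nonneg_right hNΛ (by positivity : 0 ≤ K' * ε)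
      linarith
    have h2 : (τ - ε) * β ≤ i * ε * β := by gcongr
    have h3 : ε * (Λ * K' + β) ≤ δ := by
      rwa [le_div_iff₀ (by positivity)] at hε2
    linarith

/-- Passage to the limit (Fatou for series) in the conclusion of `strict_approx`. -/
lemma strict_DD {c : ℕ → ℂ} {x0 d : ℝ} (hx0 : 0 < x0)
    (h : ∀ δ > 0, ∀ p : ℕ, ∃ c' : ℕ → ℂ,
      Summable (fun k : ℕ => ((k:ℝ)+1)*‖c' (k+1)‖^2*x0^(k+1)) ∧ EE c' x0 ≤ -d + δ ∧
      ∀ k < p, ‖c' (k+1) - c (k+1)‖ ≤ δ) :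
    Summable (fun k : ℕ => ((k:ℝ)+1)*‖c (k+1)‖^2*x0^(k+1)) ∧
      DD c x0 ≤ -4 * Real.log (1 - x0) - d := by
  have hpart : ∀ p, ∑ k ∈ Finset.range p, ((k:ℝ)+1)*‖c (k+1)‖^2*x0^(k+1)
      ≤ -4 * Real.log (1 - x0) - d := by
    intro p
    choose! c' hs hE hc using fun n : ℕ => h (1 / ((n:ℝ) + 1)) (by positivity) p
    have hlim := tendsto_one_div_add_atTop_nhds_zero_nat (𝕜 := ℝ)
    have h1 : Filter.Tendsto (fun n => ∑ k ∈ Finset.range p, ((k:ℝ)+1)*‖c' n (k+1)‖^2*x0^(k+1))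
        Filter.atTop (𝓝 (∑ k ∈ Finset.range p, ((k:ℝ)+1)*‖c (k+1)‖^2*x0^(k+1))) := by
      refine tendsto_finsetSum _ (fun k hk => ?_)
      have : Filter.Tendsto (fun n => c' n (k+1)) Filter.atTop (𝓝 (c (k+1))) := by
        rw [tendsto_iff_norm_sub_tendsto_zero]
        exact squeeze_zero (fun _ => norm_nonneg _) (fun n => hc n k (Finset.mem_range.1 hk)) hlim
      exact ((this.norm.pow 2).const_mul _).mul_const _
    have h2 : Filter.Tendsto (fun n : ℕ => -4 * Real.log (1 - x0) - d + 1 / ((n:ℝ) + 1))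
        Filter.atTop (𝓝 (-4 * Real.log (1 - x0) - d)) := by
      simpa using hlim.const_add (-4 * Real.log (1 - x0) - d)
    refine le_of_tendsto_of_tendsto' h1 h2 (fun n => ?_)
    have h3 := (hs n).sum_le_tsum (Finset.range p) (fun k _ => by positivity)
    have h4 := hE n
    unfold EE DD at h4
    linarith
  exact ⟨summable_of_sum_range_le (fun k => by positivity) hpart,
    Real.tsum_le_of_sum_range_le (fun k => by positivity) hpart⟩

/-! ### Rigidity: Koebe rotations -/

lemma uSeq_cont (c : ℕ → ℂ) (k : ℕ) : Continuous (fun κ => uSeq κ c k) := by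
  induction k with
  | zero => simp only [uSeq]; fun_prop
  | succ k ih => simp only [uSeq]; fun_prop

lemma vSeq_cont (c : ℕ → ℂ) (k : ℕ) : Continuous (fun κ => vSeq κ c k) := by
  unfold vSeq
  have := uSeq_cont c k
  have := uSeq_cont c (k+1)
  fun_prop

lemma uSeq_lip {κ : ℂ} (hκ : ‖κ‖ = 1) {c c' : ℕ → ℂ} {m : ℕ} {θ : ℝ} (hθ : 0 ≤ θ)
    (h : ∀ k < m, ‖c' (k+1) - c (k+1)‖ ≤ θ) (k : ℕ) (hk : k ≤ m) :
    ‖uSeq κ c' k - uSeq κ c k‖ ≤ (k:ℝ)^2 * θ := by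
  induction k with
  | zero => simp [uSeq]
  | succ k ih =>
    have h1 := ih (by omega)
    have h2 := h k (by omega)
    have e : uSeq κ c' (k+1) - uSeq κ c (k+1)
        = ((k:ℂ)+1) * (c' (k+1) - c (k+1)) - κ * (uSeq κ c' k - uSeq κ c k) := by
      simp only [uSeq]; ring
    rw [e]
    refine (norm_sub_le _ _).trans ?_
    rw [norm_mul, norm_mul, hκ, one_mul]
    have h3 : ‖(k:ℂ)+1‖ = (k:ℝ)+1 := by
      exact_mod_cast Complex.norm_natCast (k+1)
    rw [h3]
    have h4 : ((k:ℝ)+1) * ‖c' (k+1) - c (k+1)‖ ≤ ((k:ℝ)+1) * θ := by gcongr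
    push_cast
    have : 0 ≤ (k:ℝ) * θ := by positivity
    nlinarith

lemma vSeq_lip {κ : ℂ} (hκ : ‖κ‖ = 1) {c c' : ℕ → ℂ} {m : ℕ} {θ : ℝ} (hθ : 0 ≤ θ)
    (h : ∀ k < m, ‖c' (k+1) - c (k+1)‖ ≤ θ) (k : ℕ) (hk : k < m) :
    ‖vSeq κ c' k - vSeq κ c k‖ ≤ 2 * (m:ℝ)^2 * θ := by
  have h1 := uSeq_lip hκ hθ h k hk.le
  have h2 := uSeq_lip hκ hθ h (k+1) hk
  have e : vSeq κ c' k - vSeq κ c k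
      = κ * (uSeq κ c' k - uSeq κ c k) - (uSeq κ c' (k+1) - uSeq κ c (k+1)) := by
    unfold vSeq; ring
  rw [e]
  refine (norm_sub_le _ _).trans ?_
  rw [norm_mul, hκ, one_mul]
  have h3 : ((k:ℝ))^2 * θ ≤ (m:ℝ)^2 * θ := by
    have : (k:ℝ) ≤ m := by exact_mod_cast hk.le
    gcongr
  have h4 : (((k+1 : ℕ):ℝ))^2 * θ ≤ (m:ℝ)^2 * θ := by
    have : ((k+1 : ℕ):ℝ) ≤ m := by exact_mod_cast hk
    gcongr
  linarith

/-- A vanishing velocity forces the coefficients of `-2 log (1 - κ z)`. -/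
lemma koebe_of_vSeq {κ : ℂ} {c : ℕ → ℂ} (h : ∀ k, vSeq κ c k = 0) (k : ℕ) :
    ((k:ℂ)+1) * c (k+1) = 2 * κ^(k+1) := by
  have hu : ∀ k, uSeq κ c k = κ ^ k := by
    intro k
    induction k with
    | zero => simp [uSeq]
    | succ k ih =>
      have := h k
      unfold vSeq at this
      rw [ih] at this
      linear_combination -this
  have h1 := hu (k+1)
  simp only [uSeq] at h1
  rw [hu k] at h1
  linear_combination h1

/-- Unless `c` is the coefficient sequence of a Koebe rotation, the velocity is bounded below on
finitely many indices, uniformly in `κ` and in a neighbourhood of `c`; it is also bounded above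
there. -/
lemma deficiency {c : ℕ → ℂ}
    (hne : ¬ ∃ κ : ℂ, ‖κ‖ = 1 ∧ ∀ k : ℕ, ((k:ℂ)+1) * c (k+1) = 2 * κ^(k+1)) :
    ∃ m : ℕ, ∃ θ η C0 : ℝ, 0 < θ ∧ θ ≤ 1 ∧ 0 < η ∧ 0 ≤ C0 ∧
    (∀ κ : ℂ, ‖κ‖ = 1 → ∀ c' : ℕ → ℂ, (∀ k < m, ‖c' (k+1) - c (k+1)‖ ≤ θ) →
      η ≤ ∑ k ∈ Finset.range m, ‖vSeq κ c' k‖^2) ∧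
    (∀ κ : ℂ, ‖κ‖ = 1 → ∀ c' : ℕ → ℂ, (∀ k < m, ‖c' (k+1) - c (k+1)‖ ≤ 2) →
      ∀ k < m, ‖vSeq κ c' k‖ ≤ C0) := by
  set F : ℕ → ℂ → ℝ := fun m κ => ∑ k ∈ Finset.range m, ‖vSeq κ c k‖^2 with hFdef
  have hFc : ∀ m, Continuous (F m) := fun m =>
    continuous_finsetSum _ (fun k _ => ((vSeq_cont c k).norm.pow 2))
  obtain ⟨m, hm⟩ := (isCompact_sphere (0:ℂ) 1).elim_directed_cover
    (fun m => {κ | 0 < F m κ}) (fun m => isOpen_lt continuous_const (hFc m)) (by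
      intro κ hκ
      rw [mem_sphere_zero_iff_norm] at hκ
      rw [Set.mem_iUnion]
      have : ∃ k, vSeq κ c k ≠ 0 := by
        by_contra hcon
        push Not at hcon
        exact hne ⟨κ, hκ, koebe_of_vSeq hcon⟩
      obtain ⟨k, hk⟩ := this
      refine ⟨k+1, ?_⟩
      change (0:ℝ) < ∑ k ∈ Finset.range (k+1), ‖vSeq κ c k‖^2
      exact Finset.sum_pos' (fun _ _ => by positivity)
        ⟨k, Finset.self_mem_range_succ k, by positivity⟩)
    (Monotone.directed_le (fun a b hab κ hκ => lt_of_lt_of_le (b := F a κ) hκ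
      (Finset.sum_le_sum_of_subset_of_nonneg (Finset.range_mono hab) (fun _ _ _ => by positivity))))
  have hsne : (sphere (0:ℂ) 1).Nonempty := NormedSpace.sphere_nonempty.2 zero_le_one
  obtain ⟨κ0, hκ0, hmin⟩ := (isCompact_sphere (0:ℂ) 1).exists_isMinOn hsne (hFc m).continuousOn
  set η0 := F m κ0 with hη0
  have hη0pos : 0 < η0 := hm hκ0
  obtain ⟨κ1, hκ1, hmax⟩ := (isCompact_sphere (0:ℂ) 1).exists_isMaxOn hsne
    (continuous_finsetSum (Finset.range m) (fun k _ => (vSeq_cont c k).norm)).continuousOn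
  set C1 := ∑ k ∈ Finset.range m, ‖vSeq κ1 c k‖ with hC1
  set θ := min 1 (η0 / (16 * (m:ℝ)^5 + 16)) with hθ
  have hθ0 : 0 < θ := lt_min one_pos (by positivity)
  have hθ1 : θ ≤ 1 := min_le_left _ _
  refine ⟨m, θ, η0 / 4, C1 + 4 * (m:ℝ)^2, hθ0, hθ1, by positivity,
    add_nonneg (Finset.sum_nonneg (fun _ _ => norm_nonneg _)) (by positivity), ?_, ?_⟩
  · intro κ hκ c' hc'
    have h1 : η0 ≤ F m κ := hmin (by simpa using hκ)
    have h2 : ∀ k ∈ Finset.range m, ‖vSeq κ c k‖^2 ≤ 2 * ‖vSeq κ c' k‖^2 + 8 * (m:ℝ)^4 * θ^2 := by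
      intro k hk
      have h3 := vSeq_lip hκ hθ0.le hc' k (Finset.mem_range.1 hk)
      have h4 : ‖vSeq κ c k‖ ≤ ‖vSeq κ c' k‖ + 2 * (m:ℝ)^2 * θ := by
        have := norm_le_norm_add_norm_sub (vSeq κ c' k) (vSeq κ c k)
        linarith
      have h5 := pow_le_pow_left₀ (norm_nonneg _) h4 2
      nlinarith [sq_nonneg (‖vSeq κ c' k‖ - 2 * (m:ℝ)^2 * θ)]
    have h3 := Finset.sum_le_sum h2
    rw [Finset.sum_add_distrib, ← Finset.mul_sum, Finset.sum_const, Finset.card_range, nsmul_eq_mul] at h3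
    have h4 : θ * (16 * (m:ℝ)^5 + 16) ≤ η0 := by
      have : θ ≤ η0 / (16 * (m:ℝ)^5 + 16) := min_le_right _ _
      rwa [le_div_iff₀ (by positivity)] at this
    have h5 : (m:ℝ)^5 * θ^2 ≤ (m:ℝ)^5 * θ := by
      have : θ^2 ≤ θ := by nlinarith
      gcongr
    have h6 : (m:ℝ) * (8 * (m:ℝ)^4 * θ^2) = 8 * ((m:ℝ)^5 * θ^2) := by ring
    change F m κ ≤ _ at h3
    rw [h6] at h3
    nlinarith
  · intro κ hκ c' hc' k hk
    have h1 : ∑ k ∈ Finset.range m, ‖vSeq κ c k‖ ≤ C1 := hmax (by simpa using hκ)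
    have h2 := Finset.single_le_sum (f := fun k => ‖vSeq κ c k‖) (fun _ _ => norm_nonneg _)
      (Finset.mem_range.2 hk)
    have h3 := vSeq_lip hκ zero_le_two hc' k hk
    have h4 := norm_le_norm_add_norm_sub' (vSeq κ c' k) (vSeq κ c k)
    linarith

lemma koebe_of_coeff {f g : ℂ → ℂ} (hf0 : f 0 = 0) (hg : DifferentiableOn ℂ g (ball 0 1))
    (hg0 : g 0 = 0) (hfg : ∀ z ∈ ball (0:ℂ) 1, z ≠ 0 → Complex.exp (g z) = f z / z)
    {κ : ℂ} (hκ : ‖κ‖ = 1) (hc : ∀ k : ℕ, ((k:ℂ)+1) * co g (k+1) = 2 * κ^(k+1)) :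
    IsKoebeRotation f := by
  refine ⟨κ.arg, fun z hz => ?_⟩
  have hκe : Complex.exp (κ.arg * Complex.I) = κ := by
    have := Complex.norm_mul_exp_arg_mul_I κ
    rwa [hκ, Complex.ofReal_one, one_mul] at this
  simp only [hκe]
  rcases eq_or_ne z 0 with rfl | hz0
  · simp [hf0]
  have hw : ‖κ * z‖ < 1 := by rw [norm_mul, hκ, one_mul]; simpa using hz
  have h1 := (Complex.hasSum_taylorSeries_neg_log hw).mul_left 2
  have h2 := co_hasSum hg hz
  have e : (fun k => co g k * z ^ k) = fun k : ℕ => 2 * ((κ * z) ^ k / (k:ℂ)) := by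
    funext k
    cases k with
    | zero => simp [co_zero, hg0]
    | succ k =>
      have hk : ((k:ℂ)+1) ≠ 0 := by exact_mod_cast Nat.succ_ne_zero k
      have := hc k
      push_cast
      rw [mul_pow]
      field_simp
      linear_combination this
  rw [e] at h2
  have h3 := h2.unique h1
  have h4 := hfg z hz hz0
  have hne : 1 - κ * z ≠ 0 := by
    have := one_add_ne (w := -(κ*z)) (by rwa [norm_neg])
    rwa [← sub_eq_add_neg] at this
  rw [h3, show 2 * -Complex.log (1 - κ * z) = -(Complex.log (1 - κ * z) + Complex.log (1 - κ * z)) by ring,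
    Complex.exp_neg, Complex.exp_add, Complex.exp_log hne] at h4
  rw [eq_div_iff hz0] at h4
  rw [← h4]
  field_simp

lemma coeff_of_koebe {f g : ℂ → ℂ} (hg : DifferentiableOn ℂ g (ball 0 1))
    (hg0 : g 0 = 0) (hfg : ∀ z ∈ ball (0:ℂ) 1, z ≠ 0 → Complex.exp (g z) = f z / z)
    (hK : IsKoebeRotation f) (k : ℕ) : ((k:ℝ)+1) * ‖co g (k+1)‖ = 2 := by
  obtain ⟨θ, hθ⟩ := hK
  set κ := Complex.exp (θ * Complex.I) with hκdef
  have hκ : ‖κ‖ = 1 := Complex.norm_exp_ofReal_mul_I θ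
  have hw : ∀ z ∈ ball (0:ℂ) 1, ‖κ * z‖ < 1 := fun z hz => by
    rw [norm_mul, hκ, one_mul]; simpa using hz
  have hsl : ∀ z ∈ ball (0:ℂ) 1, 1 - κ * z ∈ slitPlane := fun z hz => by
    have := one_add_slit (w := -(κ*z)) (by rw [norm_neg]; exact hw z hz)
    rwa [← sub_eq_add_neg] at this
  have hgl : ∀ z ∈ ball (0:ℂ) 1, g z + 2 * Complex.log (1 - κ * z) = 0 := by
    intro z hz
    refine log_unique (F := fun z => g z + 2 * Complex.log (1 - κ * z)) ?_ ?_ ?_ hz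
    · refine hg.add (DifferentiableOn.const_mul ?_ 2)
      exact DifferentiableOn.clog (by fun_prop) hsl
    · simp [hg0]
    · intro z hz
      have hne : 1 - κ * z ≠ 0 := slitPlane_ne_zero (hsl z hz)
      rw [Complex.exp_add, two_mul, Complex.exp_add, Complex.exp_log hne]
      rcases eq_or_ne z 0 with rfl | hz0
      · simp [hg0]
      · rw [hfg z hz hz0, hθ hz]
        beta_reduce
        generalize 1 - κ * z = w at hne
        field_simp
  have := co_unique (L := g) (R := 1) (a := fun k : ℕ => 2 * (κ^k / (k:ℂ))) one_pos (fun z hz => by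
    have h1 := (Complex.hasSum_taylorSeries_neg_log (hw z hz)).mul_left 2
    have e : g z = 2 * -Complex.log (1 - κ * z) := by linear_combination hgl z hz
    rw [e]
    have e2 : (fun k : ℕ => 2 * (κ^k / (k:ℂ)) * z ^ k) = fun k : ℕ => 2 * ((κ * z) ^ k / (k:ℂ)) := by
      funext k; rw [mul_pow]; ring
    rw [e2]; exact h1) (k+1)
  rw [this]
  simp only [norm_mul, norm_div, norm_pow, hκ, one_pow]
  rw [Complex.norm_natCast]
  push_cast
  have : (k:ℝ)+1 ≠ 0 := by positivity
  simp only [Complex.norm_ofNat]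
  field_simp

/-! ### Integration over the parameter and the zeta function -/

open MeasureTheory in
lemma lintegral_gamma {α : ℝ} (hα : 0 < α) {a : ℝ} (ha : 0 ≤ a) (k : ℕ) :
    ∫⁻ s in Set.Ioi (0:ℝ), ENNReal.ofReal (a * Real.exp (-s) ^ (k+1) * s ^ (α-1))
      = ENNReal.ofReal (a * ((k:ℝ)+1)^(-α) * Real.Gamma α) := by
  have hk : (0:ℝ) < (k:ℝ)+1 := by positivity
  have hI := Real.integral_rpow_mul_exp_neg_mul_Ioi hα hk
  have hpos : 0 < (1 / ((k:ℝ)+1))^α * Real.Gamma α :=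
    mul_pos (Real.rpow_pos_of_pos (by positivity) _) (Real.Gamma_pos_of_pos hα)
  have hInt : IntegrableOn (fun s : ℝ => s^(α-1) * Real.exp (-(((k:ℝ)+1) * s))) (Set.Ioi 0) := by
    by_contra hc
    rw [integral_undef hc] at hI
    exact hpos.ne hI
  have e : ∀ s : ℝ, a * Real.exp (-s) ^ (k+1) * s ^ (α-1)
      = a * (s^(α-1) * Real.exp (-(((k:ℝ)+1) * s))) := by
    intro s
    rw [← Real.exp_nat_mul, show ((k+1 : ℕ):ℝ) * -s = -(((k:ℝ)+1) * s) by push_cast; ring]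
    ring
  simp_rw [e]
  rw [← ofReal_integral_eq_lintegral_ofReal (hInt.const_mul a)]
  · rw [integral_const_mul, hI, one_div, Real.inv_rpow hk.le, Real.rpow_neg hk.le]
    congr 1; ring
  · filter_upwards [ae_restrict_mem measurableSet_Ioi] with s hs
    have : 0 ≤ s ^ (α-1) := Real.rpow_nonneg (le_of_lt hs) _
    positivity

open MeasureTheory in
/-- A strict inequality between two power series with nonnegative coefficients on `(0, 1)` integrates,
against `s^{α-1} ds` with `x = e^{-s}`, to a strict inequality between the sums with weights `n^{-α}`. -/
lemma laplace_strict {α : ℝ} (hα : 0 < α) {a b : ℕ → ℝ} (ha : ∀ k, 0 ≤ a k) (hb : ∀ k, 0 ≤ b k)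
    (hsb : Summable (fun k : ℕ => b k * ((k:ℝ)+1)^(-α)))
    (h : ∀ x : ℝ, 0 < x → x < 1 → Summable (fun k => a k * x^(k+1)) ∧ Summable (fun k => b k * x^(k+1)) ∧
      ∑' k, a k * x^(k+1) < ∑' k, b k * x^(k+1)) :
    ∑' k : ℕ, a k * ((k:ℝ)+1)^(-α) < ∑' k : ℕ, b k * ((k:ℝ)+1)^(-α) := by
  have hΓ := Real.Gamma_pos_of_pos hα
  set FF : (ℕ → ℝ) → ℝ → ENNReal := fun a s =>
    ∑' k : ℕ, ENNReal.ofReal (a k * Real.exp (-s) ^ (k+1) * s ^ (α-1)) with hFF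
  have hmeas : ∀ (a : ℕ → ℝ) (k : ℕ), Measurable
      (fun s : ℝ => ENNReal.ofReal (a k * Real.exp (-s) ^ (k+1) * s ^ (α-1))) := by
    intro a k; fun_prop
  have hFFm : ∀ a, Measurable (FF a) := fun a => Measurable.tsum (hmeas a)
  have hInt : ∀ a : ℕ → ℝ, (∀ k, 0 ≤ a k) → ∫⁻ s in Set.Ioi (0:ℝ), FF a s
      = ∑' k : ℕ, ENNReal.ofReal (a k * ((k:ℝ)+1)^(-α) * Real.Gamma α) := by
    intro a ha
    rw [lintegral_tsum (fun k => (hmeas a k).aemeasurable)]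
    exact tsum_congr (fun k => lintegral_gamma hα (ha k) k)
  have hlt : ∀ s ∈ Set.Ioi (0:ℝ), FF a s < FF b s := by
    intro s hs
    have hs' : 0 < s := hs
    have hp : 0 < s ^ (α-1) := Real.rpow_pos_of_pos hs' _
    obtain ⟨h1, h2, h3⟩ := h (Real.exp (-s)) (Real.exp_pos _) (Real.exp_lt_one_iff.2 (by linarith))
    have hA : ∀ k, 0 ≤ a k * Real.exp (-s) ^ (k+1) * s ^ (α-1) := fun k => by
      have := ha k; positivity
    have hB : ∀ k, 0 ≤ b k * Real.exp (-s) ^ (k+1) * s ^ (α-1) := fun k => by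
      have := hb k; positivity
    simp only [hFF]
    rw [← ENNReal.ofReal_tsum_of_nonneg hA (h1.mul_right _),
      ← ENNReal.ofReal_tsum_of_nonneg hB (h2.mul_right _), tsum_mul_right, tsum_mul_right]
    have h0 : 0 ≤ ∑' k, a k * Real.exp (-s) ^ (k+1) := tsum_nonneg (fun k => by
      have := ha k; positivity)
    rw [ENNReal.ofReal_lt_ofReal_iff (mul_pos (h0.trans_lt h3) hp)]
    exact mul_lt_mul_of_pos_right h3 hp
  have hbt := hInt b hb
  have hat := hInt a ha
  have hBn : ∀ k : ℕ, 0 ≤ b k * ((k:ℝ)+1)^(-α) * Real.Gamma α := fun k => by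
    have := hb k
    positivity
  have hAn : ∀ k : ℕ, 0 ≤ a k * ((k:ℝ)+1)^(-α) * Real.Gamma α := fun k => by
    have := ha k
    positivity
  rw [← ENNReal.ofReal_tsum_of_nonneg hBn (hsb.mul_right _)] at hbt
  have hle : ∫⁻ s in Set.Ioi (0:ℝ), FF a s ≤ ∫⁻ s in Set.Ioi (0:ℝ), FF b s :=
    setLIntegral_mono' measurableSet_Ioi (fun s hs => (hlt s hs).le)
  have hfin : ∫⁻ s in Set.Ioi (0:ℝ), FF a s ≠ ⊤ :=
    ne_top_of_le_ne_top (by rw [hbt]; exact ENNReal.ofReal_ne_top) hle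
  have hstrict := lintegral_strict_mono (μ := volume.restrict (Set.Ioi (0:ℝ))) (by
      rw [Ne, Measure.restrict_eq_zero]; simp) (hFFm b).aemeasurable hfin (by
      filter_upwards [ae_restrict_mem measurableSet_Ioi] with s hs using hlt s hs)
  have hsA : Summable (fun k : ℕ => a k * ((k:ℝ)+1)^(-α) * Real.Gamma α) := by
    rw [hat] at hfin
    have := ENNReal.summable_toReal hfin
    refine this.congr (fun k => ENNReal.toReal_ofReal (hAn k))
  rw [hat, hbt, ← ENNReal.ofReal_tsum_of_nonneg hAn hsA] at hstrict
  have := (ENNReal.ofReal_lt_ofReal_iff_of_nonneg (tsum_nonneg hAn)).1 hstrict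
  rw [tsum_mul_right, tsum_mul_right] at this
  exact lt_of_mul_lt_mul_right this hΓ.le

lemma zeta_re {α : ℝ} (hα : 0 < α) :
    (riemannZeta ((α:ℂ)+1)).re = ∑' k : ℕ, 1 / ((k:ℝ)+1) * ((k:ℝ)+1)^(-α) := by
  rw [zeta_eq_tsum_one_div_nat_add_one_cpow (by simpa using hα)]
  have e : (fun n : ℕ => 1 / ((n:ℂ)+1)^((α:ℂ)+1))
      = fun n : ℕ => ((1 / ((n:ℝ)+1) * ((n:ℝ)+1)^(-α) : ℝ) : ℂ) := by
    funext n
    have hn : (0:ℝ) < (n:ℝ)+1 := by positivity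
    rw [show (1 / ((n:ℝ)+1) * ((n:ℝ)+1)^(-α) : ℝ) = 1 / ((n:ℝ)+1)^(α+1) by
      rw [Real.rpow_add hn, Real.rpow_one, Real.rpow_neg hn.le]; field_simp]
    push_cast
    rw [Complex.ofReal_cpow hn.le]
    push_cast; rfl
  rw [e, ← Complex.ofReal_tsum, Complex.ofReal_re]

lemma zeta_summable {α : ℝ} (hα : 0 < α) :
    Summable (fun k : ℕ => 1 / ((k:ℝ)+1) * ((k:ℝ)+1)^(-α)) := by
  have h := (summable_nat_add_iff 1).2 (Real.summable_one_div_nat_rpow.2 (by linarith : 1 < α + 1))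
  refine h.congr (fun n => ?_)
  have hn : (0:ℝ) < (n:ℝ)+1 := by positivity
  push_cast
  rw [Real.rpow_add hn, Real.rpow_one, Real.rpow_neg hn.le]; field_simp

theorem zemyan_zeta_inequality
    (α : ℝ) (hα : 0 < α) (f : ℂ → ℂ) (γ : ℕ → ℂ) (hf : InClassS f) (hγ : IsLogCoeffs f γ) :
    (∑' n : ℕ, ((n : ℝ) + 1) ^ (1 - α) * ‖γ (n + 1)‖ ^ 2
        ≤ (riemannZeta ((α : ℂ) + 1)).re) ∧
    (∑' n : ℕ, ((n : ℝ) + 1) ^ (1 - α) * ‖γ (n + 1)‖ ^ 2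
        = (riemannZeta ((α : ℂ) + 1)).re ↔ IsKoebeRotation f) := by
  obtain ⟨g, hga, hg0, hfg, hgγ⟩ := hγ
  have hg : DifferentiableOn ℂ g (ball 0 1) := hga.differentiableOn
  have hco : ∀ k : ℕ, co g (k+1) = 2 * γ (k+1) := by
    intro k
    unfold co
    rw [hgγ (k+1) (by omega)]
    have : (((k+1)! : ℕ) : ℂ) ≠ 0 := by exact_mod_cast Nat.factorial_ne_zero _
    field_simp
  have hterm : ∀ n : ℕ, ((n:ℝ)+1)^(1-α) * ‖γ (n+1)‖^2
      = (((n:ℝ)+1) * ‖γ (n+1)‖^2) * ((n:ℝ)+1)^(-α) := by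
    intro n
    have hn : (0:ℝ) < (n:ℝ)+1 := by positivity
    rw [sub_eq_add_neg, Real.rpow_add hn, Real.rpow_one]; ring
  simp_rw [hterm]
  rw [zeta_re hα]
  by_cases hK : IsKoebeRotation f
  · have heq : ∀ n : ℕ, (((n:ℝ)+1) * ‖γ (n+1)‖^2) = 1 / ((n:ℝ)+1) := by
      intro n
      have h1 := coeff_of_koebe hg hg0 hfg hK n
      rw [hco, norm_mul, Complex.norm_ofNat] at h1
      have hn : (0:ℝ) < (n:ℝ)+1 := by positivity
      have h2 : ‖γ (n+1)‖ = 1 / ((n:ℝ)+1) := by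
        rw [eq_div_iff hn.ne']; linarith
      rw [h2]; field_simp
    simp_rw [heq]
    exact ⟨le_rfl, fun _ => hK, fun _ => trivial⟩
  · obtain ⟨m, θ, η, C0, hθ0, hθ1, hη, hC0, hdef, hC⟩ := deficiency (c := co g) (by
      rintro ⟨κ, hκ, hc⟩
      exact hK (koebe_of_coeff hf.2.2.1 hg hg0 hfg hκ hc))
    have hlt : ∑' n : ℕ, (((n:ℝ)+1) * ‖γ (n+1)‖^2) * ((n:ℝ)+1)^(-α)
        < ∑' k : ℕ, 1 / ((k:ℝ)+1) * ((k:ℝ)+1)^(-α) := by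
      refine laplace_strict hα (fun k => by positivity) (fun k => by positivity) (zeta_summable hα) ?_
      intro x hx hx1
      obtain ⟨d, hd, happ⟩ := strict_approx hf hg hg0 hfg hx hx1 hθ0 hθ1 hη hC0 hdef hC
      obtain ⟨hs, hD⟩ := strict_DD hx happ
      have e : ∀ k : ℕ, ((k:ℝ)+1)*‖co g (k+1)‖^2*x^(k+1)
          = 4 * (((k:ℝ)+1)*‖γ (k+1)‖^2*x^(k+1)) := by
        intro k
        rw [hco, norm_mul, Complex.norm_ofNat]; ring
      unfold DD at hD
      simp_rw [e] at hs hD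
      rw [tsum_mul_left] at hD
      have hs' := (summable_mul_left_iff (by norm_num : (4:ℝ) ≠ 0)).1 hs
      have hlog := Real.hasSum_pow_div_log_of_abs_lt_one (x := x) (by rw [abs_of_pos hx]; exact hx1)
      have hlog' : HasSum (fun k : ℕ => 1 / ((k:ℝ)+1) * x^(k+1)) (-Real.log (1-x)) := by
        have e : (fun k : ℕ => 1 / ((k:ℝ)+1) * x^(k+1)) = fun k : ℕ => x^(k+1) / ((k:ℝ)+1) := by
          funext k; ring
        rw [e]; exact hlog
      refine ⟨hs', hlog'.summable, ?_⟩
      rw [hlog'.tsum_eq]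
      linarith
    exact ⟨hlt.le, fun h => absurd h hlt.ne, fun h => absurd h hK⟩
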